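/- Let ν be a lattice path. The increasing flip poset of the subword complex SC(Q_ν, π_ν) is a lattice. (This settles Rubey's lattice conjecture for permutations of the form w = 1 ⊕ u with u a dominant, i.e., 132-avoiding, permutation: the poset of reduced pipe dreams of such w under chute moves, which coincides with this increasing flip poset, is a lattice.) -/

import Mathlib

open scoped Classical

/-! Lattice paths: `true` = north step, `false` = east step. -/

def eastSteps (ν : List Bool) : ℕ := ν.count false
def northSteps (ν : List Bool) : ℕ := ν.count true

/-- Height at which the path first reaches abscissa `x`. -/
def heightAt : List Bool → ℕ → ℕ
  | _, 0 => 0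
  | [], _ + 1 => 0
  | true :: rest, x + 1 => heightAt rest (x + 1) + 1
  | false :: rest, x + 1 => heightAt rest x

/-- Lattice point of a path after `i` steps. -/
def pointAt (μ : List Bool) (i : ℕ) : ℕ × ℕ :=
  ((μ.take i).count false, (μ.take i).count true)

/-- The set `A_ν` of lattice points weakly above `ν`. -/
def APts (ν : List Bool) : Set (ℕ × ℕ) :=
  {p | p.1 ≤ eastSteps ν ∧ heightAt ν p.1 ≤ p.2 ∧ p.2 ≤ northSteps ν}

def Incompatible (ν : List Bool) (p q : ℕ × ℕ) : Prop :=
  (p.1 < q.1 ∧ p.2 < q.2 ∧ (q.1, p.2) ∈ APts ν) ∨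
    (q.1 < p.1 ∧ q.2 < p.2 ∧ (p.1, q.2) ∈ APts ν)

def Compatible (ν : List Bool) (p q : ℕ × ℕ) : Prop := ¬ Incompatible ν p q

def IsNuTree (ν : List Bool) (T : Set (ℕ × ℕ)) : Prop :=
  T ⊆ APts ν ∧ T.Pairwise (Compatible ν) ∧
    ∀ T', T' ⊆ APts ν → T'.Pairwise (Compatible ν) → T ⊆ T' → T' = T

def IsRightRotationAt (T T' : Set (ℕ × ℕ)) (q q' : ℕ × ℕ) : Prop :=
  ∃ x y x'' y', q = (x, y) ∧ q' = (x'', y') ∧ x < x'' ∧ y < y' ∧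
    (x, y) ∈ T ∧ (x, y') ∈ T ∧ (x'', y) ∈ T ∧
    (∀ b, y < b → b < y' → (x, b) ∉ T) ∧
    (∀ a, x < a → a < x'' → (a, y) ∉ T) ∧
    (∀ a, x < a → a < x'' → (a, y') ∉ T) ∧
    (∀ b, y < b → b < y' → (x'', b) ∉ T) ∧
    T' = (T \ {(x, y)}) ∪ {(x'', y')}

def IsRightRotation (T T' : Set (ℕ × ℕ)) : Prop :=
  ∃ q q', IsRightRotationAt T T' q q'

/-- Order relation of the rotation poset of ν-trees. -/
def TreeLE (ν : List Bool) : Set (ℕ × ℕ) → Set (ℕ × ℕ) → Prop :=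
  Relation.ReflTransGen fun A B => IsNuTree ν A ∧ IsNuTree ν B ∧ IsRightRotation A B

def IsNuPath (ν μ : List Bool) : Prop :=
  eastSteps μ = eastSteps ν ∧ northSteps μ = northSteps ν ∧
    ∀ i ≤ μ.length, pointAt μ i ∈ APts ν

noncomputable def horiz (ν : List Bool) (p : ℕ × ℕ) : ℕ :=
  sSup {k | (p.1 + k, p.2) ∈ APts ν}

/-- Covering relation of the ν-Tamari lattice. -/
def TamariCover (ν μ μ' : List Bool) : Prop :=
  IsNuPath ν μ ∧ IsNuPath ν μ' ∧
    ∃ i j, 0 < i ∧ i < j ∧ j ≤ μ.length ∧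
      μ.getD (i - 1) true = false ∧ μ.getD i false = true ∧
      horiz ν (pointAt μ j) = horiz ν (pointAt μ i) ∧
      (∀ k, i < k → k < j → horiz ν (pointAt μ k) ≠ horiz ν (pointAt μ i)) ∧
      μ' = μ.take (i - 1) ++ (μ.drop i).take (j - i) ++ [false] ++ μ.drop j

def TamariLE (ν : List Bool) : List Bool → List Bool → Prop :=
  Relation.ReflTransGen (TamariCover ν)

/-! Flushing maps -/

def rowAvail (ν : List Bool) (y : ℕ) : List ℕ :=
  ((List.range (eastSteps ν + 1)).filter fun x => decide (heightAt ν x ≤ y)).reverse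

def pointsAtHeight (μ : List Bool) (y : ℕ) : ℕ :=
  ((List.range (μ.length + 1)).filter fun i => decide ((μ.take i).count true = y)).length

def rflushAux (ν : List Bool) : List ℕ → ℕ → List ℕ → List (ℕ × ℕ)
  | [], _, _ => []
  | c :: rest, y, forbidden =>
    let placed := ((rowAvail ν y).filter fun x => decide (x ∉ forbidden)).take c
    placed.map (fun x => (x, y)) ++ rflushAux ν rest (y + 1) (forbidden ++ placed.dropLast)

/-- Right-flushing map `R`. -/
def Rflush (ν μ : List Bool) : Set (ℕ × ℕ) :=
  {p | p ∈ rflushAux ν ((List.range (northSteps ν + 1)).map (pointsAtHeight μ)) 0 []}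

def lflushAux (m : ℕ) : List ℕ → ℕ → List ℕ → List (ℕ × ℕ)
  | [], _, _ => []
  | c :: rest, y, forbidden =>
    let placed := ((List.range (m + 1)).filter fun x => decide (x ∉ forbidden)).take c
    placed.map (fun x => (x, y)) ++ lflushAux m rest (y + 1) (forbidden ++ placed.dropLast)

noncomputable def rowCount (T : Set (ℕ × ℕ)) (y : ℕ) : ℕ := {x | (x, y) ∈ T}.ncard

/-- Left-flushing map `L`. -/
noncomputable def Lflush (ν : List Bool) (T : Set (ℕ × ℕ)) : Set (ℕ × ℕ) :=
  {p | p ∈ lflushAux (eastSteps ν) ((List.range (northSteps ν + 1)).map (rowCount T)) 0 []}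

def pathPointSet (μ : List Bool) : Set (ℕ × ℕ) := {p | ∃ i ≤ μ.length, pointAt μ i = p}

/-! Bracket vectors (0-indexed positions `0,…,ℓ`). -/

noncomputable def fpos (ν : List Bool) (k : ℕ) : ℕ :=
  sSup {i | i ≤ ν.length ∧ (ν.take i).count true = k}

def bmin (ν : List Bool) : List ℕ :=
  (List.range (ν.length + 1)).map fun i => (ν.take i).count true

def IsBracketVector (ν : List Bool) (b : List ℕ) : Prop :=
  b.length = ν.length + 1 ∧
    (∀ k ≤ northSteps ν, b.getD (fpos ν k) 0 = k) ∧
    (∀ i < b.length, (bmin ν).getD i 0 ≤ b.getD i 0 ∧ b.getD i 0 ≤ northSteps ν) ∧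
    ∀ i j k, i < j → j < k → k < b.length →
      ¬(b.getD i 0 = b.getD k 0 ∧ b.getD i 0 < b.getD j 0)

noncomputable def leftChild (T : Set (ℕ × ℕ)) (p : ℕ × ℕ) : Option (ℕ × ℕ) :=
  if ∃ b, (p.1, b) ∈ T ∧ b < p.2 then some (p.1, sSup {b | (p.1, b) ∈ T ∧ b < p.2})
  else none

noncomputable def rightChild (T : Set (ℕ × ℕ)) (p : ℕ × ℕ) : Option (ℕ × ℕ) :=
  if ∃ a, (a, p.2) ∈ T ∧ p.1 < a then
    if ∃ b, (sInf {a | (a, p.2) ∈ T ∧ p.1 < a}, b) ∈ T ∧ p.2 < b then none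
    else some (sInf {a | (a, p.2) ∈ T ∧ p.1 < a}, p.2)
  else none

noncomputable def inorderAux (T : Set (ℕ × ℕ)) : ℕ → ℕ × ℕ → List (ℕ × ℕ)
  | 0, _ => []
  | fuel + 1, p =>
    (match leftChild T p with
      | none => []
      | some l => inorderAux T fuel l) ++ p ::
      (match rightChild T p with
        | none => []
        | some r => inorderAux T fuel r)

/-- Bracket vector of a ν-tree: y-coordinates read in in-order from the root `(0,n)`. -/
noncomputable def bracketOfTree (ν : List Bool) (T : Set (ℕ × ℕ)) : List ℕ :=
  (inorderAux T T.ncard (0, northSteps ν)).map Prod.snd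

noncomputable def bracketAssign (ν μ : List Bool) : List (ℕ × ℕ) :=
  ((List.range (northSteps ν + 1)).foldl
    (fun (st : List (ℕ × ℕ) × List ℕ) k =>
      let picked := ((st.2.filter fun i => decide (i ≤ fpos ν k)).reverse).take
        (pointsAtHeight μ k)
      (st.1 ++ picked.map fun i => (i, k), st.2.filter fun i => decide (i ∉ picked)))
    ([], List.range (ν.length + 1))).1

/-- Bracket vector of a ν-path. -/
noncomputable def bracketOfPath (ν μ : List Bool) : List ℕ :=
  (List.range (ν.length + 1)).map fun i => ((bracketAssign ν μ).lookup i).getD 0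

/-- Componentwise order on (equal length) integer vectors. -/
def listLE (b b' : List ℕ) : Prop :=
  b.length = b'.length ∧ ∀ i, b.getD i 0 ≤ b'.getD i 0

/-! Reversal -/

def revPath (ν : List Bool) : List Bool := ν.reverse.map fun s => !s

def revTree (ν : List Bool) (T : Set (ℕ × ℕ)) : Set (ℕ × ℕ) :=
  (fun p : ℕ × ℕ => (northSteps ν - p.2, eastSteps ν - p.1)) '' T

/-! Pipe dreams and subword complexes -/

def dOf (ν : List Bool) (p : ℕ × ℕ) : ℕ := p.1 + (northSteps ν - p.2)

def labelPerm (ν : List Bool) (p : ℕ × ℕ) : Equiv.Perm ℕ :=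
  Equiv.swap (dOf ν p + 1) (dOf ν p + 2)

/-- The points of `A_ν` in reading order: rows from bottom to top, each left to right. -/
def readingList (ν : List Bool) : List (ℕ × ℕ) :=
  ((List.range (northSteps ν + 1)).map fun y =>
    ((List.range (eastSteps ν + 1)).filter fun x => decide (heightAt ν x ≤ y)).map
      fun x => (x, y)).flatten

/-- The minimal ν-tree. -/
def TminSet (ν : List Bool) : Set (ℕ × ℕ) :=
  {p | p ∈ APts ν ∧ (p.1 = 0 ∨ ∃ i < ν.length, ν.getD i true = false ∧ p = pointAt ν (i + 1))}

noncomputable def prodOver (ν : List Bool) (C : Set (ℕ × ℕ)) : Equiv.Perm ℕ :=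
  (((readingList ν).filter fun p => decide (p ∈ C)).map (labelPerm ν)).prod

/-- Coxeter length: number of inversions. -/
noncomputable def lenInv (π : Equiv.Perm ℕ) : ℕ :=
  {q : ℕ × ℕ | q.1 < q.2 ∧ π q.2 < π q.1}.ncard

noncomputable def piNu (ν : List Bool) : Equiv.Perm ℕ := prodOver ν (APts ν \ TminSet ν)

def Qword (ν : List Bool) : List (Equiv.Perm ℕ) := (readingList ν).map (labelPerm ν)

noncomputable def prodAt (Q : List (Equiv.Perm ℕ)) (P : Finset ℕ) : Equiv.Perm ℕ :=
  (((List.range Q.length).filter fun i => decide (i ∈ P)).map fun i => Q.getD i 1).prod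

def IsFacet (Q : List (Equiv.Perm ℕ)) (π : Equiv.Perm ℕ) (I : Finset ℕ) : Prop :=
  I ⊆ Finset.range Q.length ∧
    prodAt Q (Finset.range Q.length \ I) = π ∧
    (Finset.range Q.length \ I).card = lenInv π

def IncFlip (Q : List (Equiv.Perm ℕ)) (π : Equiv.Perm ℕ) (I J : Finset ℕ) : Prop :=
  IsFacet Q π I ∧ IsFacet Q π J ∧ ∃ i ∈ I, ∃ j ∈ J, i < j ∧ I.erase i = J.erase j

def FlipLE (Q : List (Equiv.Perm ℕ)) (π : Equiv.Perm ℕ) : Finset ℕ → Finset ℕ → Prop :=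
  Relation.ReflTransGen (IncFlip Q π)

/-- The maximal ν-tree. -/
def TmaxSet (ν : List Bool) : Set (ℕ × ℕ) :=
  {p | (p.1 ≤ eastSteps ν ∧ p.2 = northSteps ν) ∨ ∃ i < ν.length, ν.getD i false = true ∧ p = pointAt ν i}

/-! ## Abstract part -/

structure Ht (m n : ℕ) (h : ℕ → ℕ) : Prop where
  zero : h 0 = 0
  mono : ∀ x x', x ≤ x' → x' ≤ m → h x ≤ h x'
  le : ∀ x, x ≤ m → h x ≤ n

structure Good (m n : ℕ) (h φ : ℕ → ℕ) : Prop where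
  z : φ 0 = n
  lb : ∀ x, x ≤ m → h x ≤ φ x
  ub : ∀ x, φ x ≤ n
  out : ∀ x, m < x → φ x = n
  pat : ∀ x x', x < x' → x' ≤ m → h x' ≤ φ x → φ x' ≤ φ x

def Tr (m : ℕ) (h φ : ℕ → ℕ) (x y : ℕ) : Prop :=
  x ≤ m ∧ h x ≤ y ∧ y ≤ φ x ∧ ∀ x2, x < x2 → x2 ≤ m → h x2 ≤ y → φ x2 ≤ y

def Cr (m n : ℕ) (h : ℕ → ℕ) (T : ℕ → ℕ → Prop) (x y : ℕ) : Prop :=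
  x ≤ m ∧ y ≤ n ∧ h x ≤ y ∧ ¬ T x y

noncomputable def rowW (n : ℕ) (C : ℕ → ℕ → Prop) (y : ℕ) : ℕ → Equiv.Perm ℕ
  | 0 => 1
  | k + 1 => rowW n C y k *
      (if C k y then Equiv.swap (k + (n - y) + 1) (k + (n - y) + 2) else 1)

noncomputable def colW (m n : ℕ) (C : ℕ → ℕ → Prop) : ℕ → Equiv.Perm ℕ
  | 0 => 1
  | y + 1 => colW m n C y * rowW n C y (m + 1)

noncomputable def pH (m n : ℕ) (C : ℕ → ℕ → Prop) (x y : ℕ) : ℕ :=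
  colW m n C y (rowW n C y x (x + (n + 1 - y)))

noncomputable def pV (m n : ℕ) (C : ℕ → ℕ → Prop) (x y : ℕ) : ℕ :=
  colW m n C y (rowW n C y x (x + (n + 1 - y) + 1))

section pipes
variable {m n : ℕ} {C : ℕ → ℕ → Prop}

lemma rowW_fix_low (y k p : ℕ) (hp : p ≤ n - y) : rowW n C y k p = p := by
  induction k with
  | zero => rfl
  | succ k ih =>
    rw [rowW, Equiv.Perm.mul_apply]
    split_ifs
    · rw [Equiv.swap_apply_of_ne_of_ne (by omega) (by omega), ih]
    · simpa using ih

lemma rowW_fix_high (y k p : ℕ) (hp : k + (n - y) + 2 ≤ p) : rowW n C y k p = p := by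
  induction k with
  | zero => rfl
  | succ k ih =>
    rw [rowW, Equiv.Perm.mul_apply]
    split_ifs
    · rw [Equiv.swap_apply_of_ne_of_ne (by omega) (by omega), ih (by omega)]
    · simpa using ih (by omega)

lemma rowW_stable (y k j p : ℕ) (hp : p ≤ k + (n - y)) :
    rowW n C y (k + j) p = rowW n C y k p := by
  induction j with
  | zero => rfl
  | succ j ih =>
    rw [← Nat.add_assoc, rowW, Equiv.Perm.mul_apply]
    split_ifs
    · rw [Equiv.swap_apply_of_ne_of_ne (by omega) (by omega), ih]
    · simpa using ih

lemma rowW_one (y k : ℕ) (hC : ∀ x, ¬ C x y) : rowW n C y k = 1 := by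
  induction k with
  | zero => rfl
  | succ k ih => rw [rowW, ih, if_neg (hC k)]; rfl

lemma colW_fix (y p : ℕ) (hp : p + y ≤ n + 1) : colW m n C y p = p := by
  induction y with
  | zero => rfl
  | succ y ih =>
    rw [colW, Equiv.Perm.mul_apply, rowW_fix_low y _ p (by omega), ih (by omega)]

lemma pH_zero (y : ℕ) (hy : y ≤ n + 1) : pH m n C 0 y = n + 1 - y := by
  unfold pH
  simp only [rowW, Equiv.Perm.one_apply]
  rw [colW_fix _ _ (by omega)]
  omega

lemma pV_zero (x : ℕ) : pV m n C x 0 = x + n + 2 := by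
  unfold pV
  rw [rowW_fix_high _ _ _ (by omega)]
  simp only [colW, Equiv.Perm.one_apply]
  omega

lemma pH_cross (x y : ℕ) (hy : y ≤ n) (hC : C x y) : pH m n C (x + 1) y = pH m n C x y := by
  unfold pH
  rw [rowW, if_pos hC, Equiv.Perm.mul_apply]
  have e1 : x + 1 + (n + 1 - y) = x + (n - y) + 2 := by omega
  have e2 : x + (n + 1 - y) = x + (n - y) + 1 := by omega
  rw [e1, e2, Equiv.swap_apply_right]

lemma pH_elbow (x y : ℕ) (hC : ¬ C x y) : pH m n C (x + 1) y = pV m n C x y := by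
  unfold pH pV
  rw [rowW, if_neg hC, mul_one]
  congr 2
  omega

lemma pV_aux (x y : ℕ) (hx : x ≤ m) (hy : y ≤ n) (hCn : ∀ x y, C x y → y ≤ n) :
    pV m n C x (y + 1) = colW m n C y (rowW n C y (x + 1) (x + (n - y) + 1)) := by
  unfold pV
  have e : x + (n + 1 - (y + 1)) + 1 = x + (n - y) + 1 := by omega
  rw [e]
  have h1 : rowW n C (y + 1) x (x + (n - y) + 1) = x + (n - y) + 1 := by
    rcases Nat.lt_or_ge y n with h | h
    · exact rowW_fix_high _ _ _ (by omega)
    · rw [rowW_one _ _ (fun x hc => by have := hCn _ _ hc; omega)]; rfl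
  rw [h1, colW, Equiv.Perm.mul_apply]
  obtain ⟨j, rfl⟩ := Nat.exists_eq_add_of_le hx
  have : x + j + 1 = x + 1 + j := by omega
  rw [this, rowW_stable _ _ _ _ (by omega)]

lemma pV_cross (x y : ℕ) (hx : x ≤ m) (hy : y ≤ n) (hCn : ∀ x y, C x y → y ≤ n)
    (hC : C x y) : pV m n C x (y + 1) = pV m n C x y := by
  rw [pV_aux x y hx hy hCn, rowW, if_pos hC, Equiv.Perm.mul_apply, Equiv.swap_apply_left]
  unfold pV
  congr 2
  omega

lemma pV_elbow (x y : ℕ) (hx : x ≤ m) (hy : y ≤ n) (hCn : ∀ x y, C x y → y ≤ n)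
    (hC : ¬ C x y) : pV m n C x (y + 1) = pH m n C x y := by
  rw [pV_aux x y hx hy hCn, rowW, if_neg hC, mul_one]
  unfold pH
  congr 2
  omega

lemma pV_top (x : ℕ) (hCn : ∀ x y, C x y → y ≤ n) :
    pV m n C x (n + 1) = colW m n C (n + 1) (x + 1) := by
  unfold pV
  rw [rowW_one _ _ (fun x hc => by have := hCn _ _ hc; omega)]
  simp

noncomputable def dD (m n : ℕ) (C : ℕ → ℕ → Prop) (K a y : ℕ) : ℕ :=
  ∑ x ∈ Finset.range a, if pV m n C x y ≤ K then 1 else 0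

lemma dD_cons (hCn : ∀ x y, C x y → y ≤ n) (b a y : ℕ) (hb : b ≤ y) (hy : y ≤ n)
    (ha : a ≤ m + 1) :
    dD m n C (n + 1 - b) a (y + 1) + (if pH m n C a y ≤ n + 1 - b then 1 else 0)
      = dD m n C (n + 1 - b) a y + 1 := by
  induction a with
  | zero =>
    simp only [dD, Finset.range_zero, Finset.sum_empty]
    rw [pH_zero y (by omega), if_pos (by omega)]
  | succ a ih =>
    have ih := ih (by omega)
    unfold dD at ih ⊢
    rw [Finset.sum_range_succ, Finset.sum_range_succ]
    by_cases hC : C a y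
    · rw [pV_cross a y (by omega) hy hCn hC, pH_cross a y hy hC]
      omega
    · rw [pV_elbow a y (by omega) hy hCn hC, pH_elbow a y hC]
      omega

lemma dD_mono_a (K a a' y : ℕ) (h : a ≤ a') : dD m n C K a y ≤ dD m n C K a' y := by
  unfold dD
  apply Finset.sum_le_sum_of_subset
  intro x; simp; omega

lemma dD_mono_y (hCn : ∀ x y, C x y → y ≤ n) (b a y y' : ℕ) (hb : b ≤ y) (hyy : y ≤ y')
    (hy : y' ≤ n + 1) (ha : a ≤ m + 1) :
    dD m n C (n + 1 - b) a y ≤ dD m n C (n + 1 - b) a y' := by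
  induction y', hyy using Nat.le_induction with
  | base => rfl
  | succ y' hy' ih =>
    have h1 := ih (by omega)
    have h2 := dD_cons (m := m) hCn b a y' (by omega) (by omega) ha
    have : (if pH m n C a y' ≤ n + 1 - b then 1 else 0) ≤ 1 := by split_ifs <;> omega
    omega

lemma dD_elbow (hCn : ∀ x y, C x y → y ≤ n) (b x y : ℕ) (hb : b ≤ y) (hy : y ≤ n)
    (hx : x ≤ m) (hC : ¬ C x y) :
    dD m n C (n + 1 - b) x y + 1 ≤ dD m n C (n + 1 - b) (x + 1) (y + 1) := by
  have h2 := dD_cons (m := m) hCn b (x + 1) y hb hy (by omega)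
  rw [pH_elbow x y hC] at h2
  have h3 : dD m n C (n + 1 - b) (x + 1) y = dD m n C (n + 1 - b) x y +
    (if pV m n C x y ≤ n + 1 - b then 1 else 0) := by
    unfold dD; rw [Finset.sum_range_succ]
  omega

lemma two_chain (hCn : ∀ x y, C x y → y ≤ n) (x1 y1 x2 y2 : ℕ) (hx : x1 < x2) (hy : y1 < y2)
    (hx2 : x2 ≤ m) (hy2 : y2 ≤ n) (h1 : ¬ C x1 y1) (h2 : ¬ C x2 y2) :
    2 ≤ ∑ x ∈ Finset.range (x2 + 1), if colW m n C (n + 1) (x + 1) ≤ n + 1 - y1 then 1 else 0 := by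
  have e1 := dD_elbow (m := m) hCn y1 x1 y1 le_rfl (by omega) (by omega) h1
  have e2 := dD_elbow (m := m) hCn y1 x2 y2 (by omega) (by omega) (by omega) h2
  have e3 := dD_mono_y (m := m) hCn y1 (x1 + 1) (y1 + 1) y2 (by omega) (by omega) (by omega) (by omega)
  have e4 := dD_mono_a (m := m) (n := n) (C := C) (n + 1 - y1) (x1 + 1) x2 y2 (by omega)
  have e5 := dD_mono_y (m := m) hCn y1 (x2 + 1) (y2 + 1) (n + 1) (by omega) (by omega) (by omega) (by omega)
  have e6 : dD m n C (n + 1 - y1) (x2 + 1) (n + 1) =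
      ∑ x ∈ Finset.range (x2 + 1), if colW m n C (n + 1) (x + 1) ≤ n + 1 - y1 then 1 else 0 := by
    unfold dD
    apply Finset.sum_congr rfl
    intro x _
    rw [pV_top x hCn]
  omega

end pipes

/-! ### Inversions -/

lemma lenInv_step (w : Equiv.Perm ℕ) (a : ℕ) (hlt : w a < w (a + 1))
    (hfin : {q : ℕ × ℕ | q.1 < q.2 ∧ w q.2 < w q.1}.Finite) :
    {q : ℕ × ℕ | q.1 < q.2 ∧ (w * Equiv.swap a (a + 1)) q.2 < (w * Equiv.swap a (a + 1)) q.1}.Finite ∧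
    lenInv (w * Equiv.swap a (a + 1)) = lenInv w + 1 := by
  have key : {q : ℕ × ℕ | q.1 < q.2 ∧
      (w * Equiv.swap a (a + 1)) q.2 < (w * Equiv.swap a (a + 1)) q.1} =
      insert (a, a + 1) ((Prod.map (Equiv.swap a (a + 1)) (Equiv.swap a (a + 1))) ''
        {q : ℕ × ℕ | q.1 < q.2 ∧ w q.2 < w q.1}) := by
    ext ⟨i, j⟩
    simp only [Set.mem_ofPred_eq, Equiv.Perm.mul_apply, Set.mem_insert_iff, Prod.mk.injEq,
      Set.mem_image, Prod.exists, Prod.map_apply]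
    constructor
    · rintro ⟨h1, h2⟩
      by_cases hij : i = a ∧ j = a + 1
      · exact Or.inl hij
      · refine Or.inr ⟨Equiv.swap a (a+1) i, Equiv.swap a (a+1) j, ⟨?_, h2⟩, by simp, by simp⟩
        simp only [Equiv.swap_apply_def]
        split_ifs <;> omega
    · rintro (⟨rfl, rfl⟩ | ⟨i', j', ⟨h1, h2⟩, rfl, rfl⟩)
      · simpa using hlt
      · refine ⟨?_, by simpa using h2⟩
        have : ¬ (i' = a ∧ j' = a + 1) := by
          rintro ⟨rfl, rfl⟩; omega
        simp only [Equiv.swap_apply_def]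
        split_ifs <;> omega
  have hnot : (a, a + 1) ∉ ((Prod.map (Equiv.swap a (a + 1)) (Equiv.swap a (a + 1))) ''
        {q : ℕ × ℕ | q.1 < q.2 ∧ w q.2 < w q.1}) := by
    rintro ⟨⟨i, j⟩, ⟨h1, h2⟩, h3⟩
    simp only [Prod.map_apply, Prod.mk.injEq] at h3
    have hi : i = a + 1 := by
      have := congrArg (Equiv.swap a (a+1)) h3.1; simpa using this
    have hj : j = a := by
      have := congrArg (Equiv.swap a (a+1)) h3.2; simpa using this
    simp only at h1; omega
  have hinj : Function.Injective (Prod.map (Equiv.swap a (a + 1)) (Equiv.swap a (a + 1))) :=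
    (Equiv.injective _).prodMap (Equiv.injective _)
  constructor
  · rw [key]; exact (hfin.image _).insert _
  · unfold lenInv
    rw [key, Set.ncard_insert_of_notMem hnot (hfin.image _), Set.ncard_image_of_injective _ hinj]

lemma lenInv_one : {q : ℕ × ℕ | q.1 < q.2 ∧ (1 : Equiv.Perm ℕ) q.2 < (1 : Equiv.Perm ℕ) q.1}.Finite ∧
    lenInv 1 = 0 := by
  have : {q : ℕ × ℕ | q.1 < q.2 ∧ (1 : Equiv.Perm ℕ) q.2 < (1 : Equiv.Perm ℕ) q.1} = ∅ := by
    ext ⟨i, j⟩; simp; omega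
  unfold lenInv
  rw [this]; simp

lemma lenInv_col {m n : ℕ} {C : ℕ → ℕ → Prop}
    (hred : ∀ x y, x ≤ m → y ≤ n → C x y → pH m n C x y < pV m n C x y) (y : ℕ) (hy : y ≤ n + 1) :
    {q : ℕ × ℕ | q.1 < q.2 ∧ colW m n C y q.2 < colW m n C y q.1}.Finite ∧
    lenInv (colW m n C y) = ∑ y' ∈ Finset.range y, ∑ x ∈ Finset.range (m + 1), if C x y' then 1 else 0 := by
  induction y with
  | zero => simpa [colW] using lenInv_one
  | succ y ih =>
    have ih := ih (by omega)
    have row : ∀ k, k ≤ m + 1 →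
      {q : ℕ × ℕ | q.1 < q.2 ∧ (colW m n C y * rowW n C y k) q.2 < (colW m n C y * rowW n C y k) q.1}.Finite ∧
      lenInv (colW m n C y * rowW n C y k) = lenInv (colW m n C y) +
        ∑ x ∈ Finset.range k, if C x y then 1 else 0 := by
      intro k hk
      induction k with
      | zero => simpa [rowW] using ih.1
      | succ k ihk =>
        have ihk := ihk (by omega)
        rw [rowW, Finset.sum_range_succ]
        by_cases hC : C k y
        · rw [if_pos hC, if_pos hC, ← mul_assoc]
          have := hred k y (by omega) (by omega) hC
          have e2 : k + (n + 1 - y) = k + (n - y) + 1 := by omega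
          unfold pH pV at this
          rw [e2] at this
          have h := lenInv_step (colW m n C y * rowW n C y k) (k + (n - y) + 1) this ihk.1
          refine ⟨h.1, ?_⟩
          rw [h.2, ihk.2]; omega
        · rw [if_neg hC, if_neg hC, mul_one]
          simpa using ihk
    have := row (m + 1) le_rfl
    rw [colW, Finset.sum_range_succ, ← ih.2]
    exact this

/-! ### The minimal tree -/

def phiMin (m n : ℕ) (h : ℕ → ℕ) (x : ℕ) : ℕ := if x = 0 then n else if x ≤ m then h x else n

lemma phiMin_good {m n : ℕ} {h : ℕ → ℕ} (H : Ht m n h) : Good m n h (phiMin m n h) := by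
  have ub : ∀ x, phiMin m n h x ≤ n := by
    intro x; unfold phiMin; split_ifs with h1 h2
    · exact le_rfl
    · exact H.le x h2
    · exact le_rfl
  refine ⟨by simp [phiMin], ?_, ub, ?_, ?_⟩
  · intro x hx; unfold phiMin; split_ifs with h1
    · exact H.le x hx
    · exact le_rfl
  · intro x hx; unfold phiMin; rw [if_neg (by omega), if_neg (by omega)]
  · intro x x' hlt hx' hh
    have e : phiMin m n h x' = h x' := by
      unfold phiMin; rw [if_neg (by omega), if_pos hx']
    rw [e]; exact hh

lemma phiMin_le {m n : ℕ} {h φ : ℕ → ℕ} (G : Good m n h φ) : phiMin m n h ≤ φ := by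
  intro x; unfold phiMin; split_ifs with h1 h2
  · rw [h1, G.z]
  · exact G.lb x h2
  · rw [G.out x (by omega)]

lemma Tr_min {m n : ℕ} {h : ℕ → ℕ} (H : Ht m n h) (x y : ℕ) :
    Tr m h (phiMin m n h) x y ↔ x ≤ m ∧ h x ≤ y ∧ y ≤ n ∧ (x = 0 ∨ y = h x) := by
  unfold Tr phiMin
  constructor
  · rintro ⟨h1, h2, h3, h4⟩
    have := H.le x h1
    split_ifs at h3 <;> omega
  · rintro ⟨h1, h2, h3, h4⟩
    refine ⟨h1, h2, ?_, ?_⟩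
    · split_ifs <;> omega
    · intro x2 hx2 hm hh
      rw [if_neg (by omega), if_pos hm]; exact hh

lemma Cr_min {m n : ℕ} {h : ℕ → ℕ} (H : Ht m n h) (x y : ℕ) :
    Cr m n h (Tr m h (phiMin m n h)) x y ↔ 1 ≤ x ∧ x ≤ m ∧ y ≤ n ∧ h x < y := by
  unfold Cr
  rw [Tr_min H]
  constructor
  · rintro ⟨h1, h2, h3, h4⟩
    by_contra hc
    apply h4
    refine ⟨h1, h3, h2, ?_⟩
    omega
  · rintro ⟨h1, h2, h3, h4⟩
    refine ⟨h2, h3, by omega, by omega⟩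

lemma min_pipes {m n : ℕ} {h : ℕ → ℕ} (H : Ht m n h) {C : ℕ → ℕ → Prop}
    (hC : ∀ x y, C x y ↔ 1 ≤ x ∧ x ≤ m ∧ y ≤ n ∧ h x < y) (y : ℕ) :
    (∀ x, 1 ≤ x → x ≤ m → y ≤ n + 1 → n + 2 - min (h x) (y - 1) ≤ pV m n C x y) ∧
    (∀ x, 1 ≤ x → x ≤ m + 1 → y ≤ n → n + 2 - y ≤ pH m n C x y ∧
      ((∀ z, 1 ≤ z → z < x → h z < y) → pH m n C x y = n + 2 - y)) := by
  have hCn : ∀ x y, C x y → y ≤ n := fun x y hc => ((hC x y).1 hc).2.2.1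
  induction y with
  | zero =>
    have hV : ∀ x, 1 ≤ x → x ≤ m → 0 ≤ n + 1 → n + 2 - min (h x) (0 - 1) ≤ pV m n C x 0 := by
      intro x _ _ _; rw [pV_zero]; omega
    refine ⟨hV, ?_⟩
    intro x hx hxm _
    obtain ⟨x, rfl⟩ : ∃ x', x = x' + 1 := ⟨x - 1, by omega⟩
    rw [pH_elbow x 0 (by rw [hC]; omega), pV_zero]
    refine ⟨by omega, ?_⟩
    intro hz
    rcases Nat.eq_zero_or_pos x with h0 | h0
    · omega
    · have := hz x h0 (by omega); omega
  | succ y ih =>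
    have hV : ∀ x, 1 ≤ x → x ≤ m → y + 1 ≤ n + 1 →
        n + 2 - min (h x) (y + 1 - 1) ≤ pV m n C x (y + 1) := by
      intro x hx hxm hy
      by_cases hc : C x y
      · rw [pV_cross x y hxm (by omega) hCn hc]
        have h1 := ih.1 x hx hxm (by omega)
        have h2 := (hC x y).1 hc
        have e1 : min (h x) (y - 1) = h x := by omega
        have e2 : min (h x) (y + 1 - 1) = h x := by omega
        rw [e2]; rw [e1] at h1; exact h1
      · rw [pV_elbow x y hxm (by omega) hCn hc]
        have h1 := (ih.2 x hx (by omega) (by omega)).1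
        have h2 : y ≤ h x := by
          by_contra hlt
          exact hc ((hC x y).2 ⟨hx, hxm, by omega, by omega⟩)
        omega
    refine ⟨hV, ?_⟩
    intro x hx hxm hy
    induction x, hx using Nat.le_induction with
    | base =>
      have hn : pH m n C 1 (y + 1) = n + 2 - (y + 1) := by
        rw [pH_elbow 0 _ (by rw [hC]; omega)]
        rw [pV_elbow 0 y (by omega) (by omega) hCn (by rw [hC]; omega), pH_zero y (by omega)]
        omega
      exact ⟨by omega, fun _ => hn⟩
    | succ x hx ihx =>
      have ihx := ihx (by omega)
      by_cases hc : C x (y + 1)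
      · rw [pH_cross x _ hy hc]
        exact ⟨ihx.1, fun hz => ihx.2 (fun z h1 h2 => hz z h1 (by omega))⟩
      · rw [pH_elbow x _ hc]
        have h2 : y + 1 ≤ h x := by
          by_contra hlt
          exact hc ((hC x _).2 ⟨hx, by omega, by omega, by omega⟩)
        have h1 := hV x hx (by omega) (by omega)
        refine ⟨by omega, ?_⟩
        intro hz
        have := hz x hx (by omega)
        omega

lemma min_red {m n : ℕ} {h : ℕ → ℕ} (H : Ht m n h) {C : ℕ → ℕ → Prop}
    (hC : ∀ x y, C x y ↔ 1 ≤ x ∧ x ≤ m ∧ y ≤ n ∧ h x < y) (x y : ℕ) (hc : C x y) :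
    pH m n C x y < pV m n C x y := by
  obtain ⟨h1, h2, h3, h4⟩ := (hC x y).1 hc
  have hp := min_pipes H hC y
  have a := hp.1 x h1 h2 (by omega)
  have b := (hp.2 x h1 (by omega) h3).2 (fun z _ hz => by
    have := H.mono z x (by omega) h2; omega)
  omega

lemma min_rank {m n : ℕ} {h : ℕ → ℕ} (H : Ht m n h) {C : ℕ → ℕ → Prop}
    (hC : ∀ x y, C x y ↔ 1 ≤ x ∧ x ≤ m ∧ y ≤ n ∧ h x < y) (x2 y1 : ℕ) (hx2 : x2 ≤ m)
    (hy1 : y1 ≤ n) (hh : h x2 ≤ y1) :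
    (∑ x ∈ Finset.range (x2 + 1), if colW m n C (n + 1) (x + 1) ≤ n + 1 - y1 then 1 else 0) ≤ 1 := by
  have hCn : ∀ x y, C x y → y ≤ n := fun x y hc => ((hC x y).1 hc).2.2.1
  rw [Finset.sum_range_succ']
  have : (∑ x ∈ Finset.range x2, if colW m n C (n + 1) (x + 1 + 1) ≤ n + 1 - y1 then 1 else 0) = 0 := by
    apply Finset.sum_eq_zero
    intro x hx
    have hx := Finset.mem_range.1 hx
    rw [if_neg]
    rw [← pV_top (m := m) (x + 1) hCn]
    have := (min_pipes H hC (n + 1)).1 (x + 1) (by omega) (by omega) le_rfl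
    have h3 := H.mono (x + 1) x2 (by omega) hx2
    omega
  rw [this]
  split_ifs <;> omega

/-- Any set of elbows whose crosses multiply to the minimal product is pairwise compatible. -/
lemma compat_of_prod {m n : ℕ} {h : ℕ → ℕ} (H : Ht m n h) (T : ℕ → ℕ → Prop)
    (hp : colW m n (Cr m n h T) (n + 1) = colW m n (Cr m n h (Tr m h (phiMin m n h))) (n + 1))
    (x1 y1 x2 y2 : ℕ) (h1 : T x1 y1) (h2 : T x2 y2) (hx : x1 < x2) (hy : y1 < y2)
    (hx2 : x2 ≤ m) (hy2 : y2 ≤ n) (hh : h x2 ≤ y1) : False := by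
  have a := two_chain (m := m) (n := n) (C := Cr m n h T) (fun x y hc => hc.2.1) x1 y1 x2 y2 hx hy hx2 hy2
    (fun hc => hc.2.2.2 h1) (fun hc => hc.2.2.2 h2)
  rw [hp] at a
  have b := min_rank H (Cr_min H) x2 y1 hx2 (by omega) hh
  omega

/-! ### Flips preserve the product -/

lemma flip_prod {m n : ℕ} {C C' : ℕ → ℕ → Prop} (x0 y0 x1 y1 : ℕ) (hy : y0 < y1) (hx0 : x0 ≤ m)
    (hx1 : x1 ≤ m) (hy1 : y1 ≤ n)
    (h0 : ¬ C x0 y0) (h0' : C' x0 y0) (h1 : C x1 y1) (h1' : ¬ C' x1 y1)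
    (hne : ∀ x y, (x, y) ≠ (x0, y0) → (x, y) ≠ (x1, y1) → (C' x y ↔ C x y))
    (eH : pH m n C x0 y0 = pH m n C x1 y1) (eV : pV m n C x0 y0 = pV m n C x1 y1) :
    colW m n C' (n + 1) = colW m n C (n + 1) := by
  have rowsame : ∀ y k, y ≠ y0 → y ≠ y1 → rowW n C' y k = rowW n C y k := by
    intro y k hy0 hy1
    induction k with
    | zero => rfl
    | succ k ih =>
      rw [rowW, rowW, ih]
      have := hne k y (by simp [hy0]) (by simp [hy1])
      simp only [this]
  have A : ∀ y, y ≤ y0 → colW m n C' y = colW m n C y := by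
    intro y hyy
    induction y with
    | zero => rfl
    | succ y ih => rw [colW, colW, ih (by omega), rowsame _ _ (by omega) (by omega)]
  set t := Equiv.swap (pH m n C x0 y0) (pV m n C x0 y0) with ht
  have B0 : ∀ k, k ≤ x0 → rowW n C' y0 k = rowW n C y0 k := by
    intro k hk
    induction k with
    | zero => rfl
    | succ k ih =>
      rw [rowW, rowW, ih (by omega)]
      have := hne k y0 (by simp; omega) (by simp; omega)
      simp only [this]
  have B1 : ∀ k, x0 + 1 ≤ k → colW m n C y0 * rowW n C' y0 k = t * (colW m n C y0 * rowW n C y0 k) := by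
    intro k hk
    induction k, hk using Nat.le_induction with
    | base =>
      rw [rowW, rowW, if_pos h0', if_neg h0, B0 _ le_rfl, mul_one, ← mul_assoc,
        Equiv.mul_swap_eq_swap_mul]
      congr 1
      rw [ht]
      unfold pH pV
      have e2 : x0 + (n + 1 - y0) = x0 + (n - y0) + 1 := by omega
      rw [e2]
      rfl
    | succ k hk ih =>
      rw [rowW, rowW, ← mul_assoc, ih]
      have := hne k y0 (by simp; omega) (by simp; omega)
      simp only [this, mul_assoc]
  have B2 : ∀ y, y0 + 1 ≤ y → y ≤ y1 → colW m n C' y = t * colW m n C y := by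
    intro y hyy
    induction y, hyy using Nat.le_induction with
    | base => intro _; rw [colW, colW, A _ le_rfl, B1 _ (by omega)]
    | succ y hyy ih =>
      intro hle
      rw [colW, colW, ih (by omega), rowsame _ _ (by omega) (by omega), mul_assoc]
  have D0 : ∀ k, k ≤ x1 → rowW n C' y1 k = rowW n C y1 k := by
    intro k hk
    induction k with
    | zero => rfl
    | succ k ih =>
      rw [rowW, rowW, ih (by omega)]
      have := hne k y1 (by simp; omega) (by simp; omega)
      simp only [this]
  have D1 : ∀ k, x1 + 1 ≤ k → t * colW m n C y1 * rowW n C' y1 k = colW m n C y1 * rowW n C y1 k := by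
    intro k hk
    induction k, hk using Nat.le_induction with
    | base =>
      rw [rowW, rowW, if_pos h1, if_neg h1', D0 _ le_rfl, mul_one, ← mul_assoc,
        Equiv.mul_swap_eq_swap_mul, mul_assoc]
      congr 1
      rw [ht, eH, eV]
      unfold pH pV
      have e2 : x1 + (n + 1 - y1) = x1 + (n - y1) + 1 := by omega
      rw [e2]
      rfl
    | succ k hk ih =>
      rw [rowW, rowW, ← mul_assoc, ih]
      have := hne k y1 (by simp; omega) (by simp; omega)
      simp only [this, mul_assoc]
  have E : ∀ y, y1 + 1 ≤ y → colW m n C' y = colW m n C y := by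
    intro y hyy
    induction y, hyy using Nat.le_induction with
    | base => rw [colW, colW, B2 _ (by omega) le_rfl, D1 _ (by omega)]
    | succ y hyy ih => rw [colW, colW, ih, rowsame _ _ (by omega) (by omega)]
  exact E _ (by omega)

lemma rect_pipes {m n : ℕ} {C : ℕ → ℕ → Prop} (hCn : ∀ x y, C x y → y ≤ n)
    (x0 y0 x1 y1 : ℕ) (hx : x0 < x1) (hy : y0 < y1) (hx1 : x1 ≤ m) (hy1 : y1 ≤ n)
    (h00 : ¬ C x0 y0) (h01 : ¬ C x0 y1) (h10 : ¬ C x1 y0)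
    (hL : ∀ b, y0 < b → b < y1 → C x0 b) (hR : ∀ b, y0 < b → b < y1 → C x1 b)
    (hB : ∀ a, x0 < a → a < x1 → C a y0) (hT : ∀ a, x0 < a → a < x1 → C a y1) :
    pH m n C x0 y0 = pH m n C x1 y1 ∧ pV m n C x0 y0 = pV m n C x1 y1 := by
  constructor
  · have s1 : ∀ b, y0 + 1 ≤ b → b ≤ y1 → pV m n C x0 b = pH m n C x0 y0 := by
      intro b hb
      induction b, hb using Nat.le_induction with
      | base => intro _; exact pV_elbow x0 y0 (by omega) (by omega) hCn h00
      | succ b hb ih =>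
        intro hle
        rw [pV_cross x0 b (by omega) (by omega) hCn (hL b (by omega) (by omega)), ih (by omega)]
    have s2 : ∀ a, x0 + 1 ≤ a → a ≤ x1 → pH m n C a y1 = pH m n C x0 y0 := by
      intro a ha
      induction a, ha using Nat.le_induction with
      | base => intro _; rw [pH_elbow x0 y1 h01, s1 y1 (by omega) le_rfl]
      | succ a ha ih =>
        intro hle
        rw [pH_cross a y1 hy1 (hT a (by omega) (by omega)), ih (by omega)]
    exact (s2 x1 (by omega) le_rfl).symm
  · have s1 : ∀ a, x0 + 1 ≤ a → a ≤ x1 → pH m n C a y0 = pV m n C x0 y0 := by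
      intro a ha
      induction a, ha using Nat.le_induction with
      | base => intro _; rw [pH_elbow x0 y0 h00]
      | succ a ha ih =>
        intro hle
        rw [pH_cross a y0 (by omega) (hB a (by omega) (by omega)), ih (by omega)]
    have s2 : ∀ b, y0 + 1 ≤ b → b ≤ y1 → pV m n C x1 b = pV m n C x0 y0 := by
      intro b hb
      induction b, hb using Nat.le_induction with
      | base => intro _; rw [pV_elbow x1 y0 (by omega) (by omega) hCn h10, s1 x1 (by omega) le_rfl]
      | succ b hb ih =>
        intro hle
        rw [pV_cross x1 b (by omega) (by omega) hCn (hR b (by omega) (by omega)), ih (by omega)]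
    exact (s2 y1 (by omega) le_rfl).symm

/-! ### Combinatorics of trees -/

/-- One increasing flip on the level of trees. -/
def Step (m n : ℕ) (h φ φ' : ℕ → ℕ) : Prop :=
  Good m n h φ ∧ Good m n h φ' ∧
  colW m n (Cr m n h (Tr m h φ')) (n + 1) = colW m n (Cr m n h (Tr m h φ)) (n + 1) ∧
  ∃ x0 y0 x1 y1, y0 < y1 ∧ Tr m h φ x0 y0 ∧ ¬ Tr m h φ x1 y1 ∧
    ∀ x y, Tr m h φ' x y ↔ (Tr m h φ x y ∧ (x, y) ≠ (x0, y0)) ∨ (x, y) = (x1, y1)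

/-- In each row below the top there is a rightmost column whose top is strictly higher. -/
lemma exists_nontop {m n : ℕ} {h φ : ℕ → ℕ} (H : Ht m n h) (G : Good m n h φ) (y : ℕ) (hy : y < n) :
    ∃ x, x ≤ m ∧ h x ≤ y ∧ y < φ x ∧ Tr m h φ x y ∧
      ∀ x2, x < x2 → x2 ≤ m → h x2 ≤ y → φ x2 ≤ y := by
  let P : ℕ → Prop := fun x => h x ≤ y ∧ y < φ x
  have h0 : P 0 := ⟨by rw [H.zero]; omega, by rw [G.z]; exact hy⟩
  have hs := Nat.findGreatest_spec (P := P) (Nat.zero_le m) h0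
  have hle := Nat.findGreatest_le (P := P) m
  have hm : ∀ x2, Nat.findGreatest P m < x2 → x2 ≤ m → h x2 ≤ y → φ x2 ≤ y := by
    intro x2 h1 h2 h3
    by_contra hc
    exact Nat.findGreatest_is_greatest h1 h2 ⟨h3, by omega⟩
  exact ⟨_, hle, hs.1, hs.2, ⟨hle, hs.1, hs.2.le, hm⟩, hm⟩

lemma step_exists {m n : ℕ} {h φ ψ : ℕ → ℕ} (H : Ht m n h) (G : Good m n h φ) (G' : Good m n h ψ)
    (hle : φ ≤ ψ) (hne : φ ≠ ψ) :
    ∃ φ', Step m n h φ φ' ∧ φ ≤ φ' ∧ φ' ≤ ψ ∧ ∃ x, x ≤ m ∧ φ x < φ' x := by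
  have hex : ∃ x, φ x < ψ x := by
    by_contra hc
    push Not at hc
    exact hne (le_antisymm hle hc)
  let x1 := Nat.find hex
  have hx1 : φ x1 < ψ x1 := Nat.find_spec hex
  have hx1m : ∀ x, x < x1 → φ x = ψ x := by
    intro x hx
    have := Nat.find_min hex hx
    have h2 : φ x ≤ ψ x := hle x
    omega
  have hx1le : x1 ≤ m := by
    by_contra hc
    have := G.out x1 (by omega)
    have := G'.out x1 (by omega)
    omega
  have hx10 : 0 < x1 := by
    rcases Nat.eq_zero_or_pos x1 with h0 | h0
    · rw [h0, G.z, G'.z] at hx1; omega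
    · exact h0
  let Q : ℕ → Prop := fun y => φ x1 < y ∧ ∀ x2, x1 < x2 → x2 ≤ m → h x2 ≤ y → φ x2 ≤ y
  have hQex : ∃ y, Q y := ⟨ψ x1, hx1, fun x2 h1 h2 h3 => (hle x2).trans (G'.pat x1 x2 h1 h2 h3)⟩
  have hyz : Nat.find hQex ≤ ψ x1 :=
    Nat.find_min' hQex ⟨hx1, fun x2 h1 h2 h3 => (hle x2).trans (G'.pat x1 x2 h1 h2 h3)⟩
  have hQ : Q (Nat.find hQex) := Nat.find_spec hQex
  have hmin : ∀ b, φ x1 < b → b < Nat.find hQex → ∃ x2, x1 < x2 ∧ x2 ≤ m ∧ h x2 ≤ b ∧ b < φ x2 := by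
    intro b hb1 hb2
    have := Nat.find_min hQex hb2
    by_contra hc
    push Not at hc
    exact this ⟨hb1, hc⟩
  generalize Nat.find hQex = y1 at hyz hQ hmin
  obtain ⟨hy01, hQ2⟩ := hQ
  have hy1n : y1 ≤ n := hyz.trans (G'.ub x1)
  -- lower bound for the columns to the left
  have hleft : ∀ x, x < x1 → h x1 ≤ φ x → y1 ≤ φ x := by
    intro x hx hh
    have e := hx1m x hx
    have := G'.pat x x1 hx hx1le (by omega)
    omega
  obtain ⟨x0, hx0m, hx0h, hx0y, hx0T, hx0max⟩ := exists_nontop H G (φ x1) (by omega)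
  have hx01 : x0 < x1 := by
    by_contra hc
    rcases Nat.lt_or_ge x1 x0 with h1 | h1
    · have := G.pat x1 x0 h1 hx0m hx0h; omega
    · have : x0 = x1 := by omega
      rw [this] at hx0y; omega
  have hlb1 := G.lb x1 hx1le
  -- columns strictly between
  have hbetween : ∀ a, x0 < a → a < x1 → φ a < φ x1 := by
    intro a h1 h2
    have ha := H.mono a x1 h2.le hx1le
    have h3 := hx0max a h1 (by omega) (by omega)
    by_contra hc
    have := hleft a h2 (by omega)
    omega
  have hy1x0 : y1 ≤ φ x0 := hleft x0 hx01 (by omega)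
  let φ' : ℕ → ℕ := Function.update φ x1 y1
  have e1 : φ' x1 = y1 := by simp [φ']
  have e2 : ∀ x, x ≠ x1 → φ' x = φ x := by intro x hx; simp [φ', hx]
  have G2 : Good m n h φ' := by
    refine ⟨?_, ?_, ?_, ?_, ?_⟩
    · rw [e2 0 (by omega)]; exact G.z
    · intro x hx
      by_cases hxx : x = x1
      · rw [hxx, e1]; omega
      · rw [e2 x hxx]; exact G.lb x hx
    · intro x
      by_cases hxx : x = x1
      · rw [hxx, e1]; omega
      · rw [e2 x hxx]; exact G.ub x
    · intro x hx
      rw [e2 x (by omega)]; exact G.out x hx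
    · intro x x' hlt hx' hh
      by_cases hxx : x = x1
      · subst hxx
        rw [e1] at hh ⊢
        rw [e2 x' (by omega)]
        exact hQ2 x' hlt hx' hh
      · rw [e2 x hxx] at hh ⊢
        by_cases hxx' : x' = x1
        · rw [hxx', e1]
          rw [hxx'] at hh hlt
          exact hleft x hlt hh
        · rw [e2 x' hxx']
          exact G.pat x x' hlt hx' hh
  have hT : ∀ x y, Tr m h φ' x y ↔ (Tr m h φ x y ∧ (x, y) ≠ (x0, φ x1)) ∨ (x, y) = (x1, y1) := by
    intro x y
    simp only [ne_eq, Prod.mk.injEq]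
    rcases lt_trichotomy x x1 with hx | hx | hx
    · constructor
      · rintro ⟨t1, t2, t3, t4⟩
        rw [e2 x (by omega)] at t3
        have t5 := t4 x1 hx hx1le
        rw [e1] at t5
        refine Or.inl ⟨⟨t1, t2, t3, ?_⟩, ?_⟩
        · intro z z1 z2 z3
          by_cases hz : z = x1
          · subst hz; have := t5 z3; omega
          · have := t4 z z1 z2 z3; rwa [e2 z hz] at this
        · rintro ⟨rfl, rfl⟩
          have := t5 hlb1; omega
      · rintro (⟨⟨t1, t2, t3, t4⟩, t5⟩ | t5)
        · refine ⟨t1, t2, by rw [e2 x (by omega)]; exact t3, ?_⟩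
          intro z z1 z2 z3
          by_cases hz : z = x1
          · subst hz
            rw [e1]
            have h1 := t4 x1 z1 z2 z3
            by_contra hc
            rcases Nat.eq_or_lt_of_le h1 with h2 | h2
            · -- row y0
              have : x ≠ x0 := fun h => t5 ⟨h, h2.symm⟩
              rcases Nat.lt_or_ge x x0 with h3 | h3
              · have := t4 x0 h3 hx0m (by omega); omega
              · have := hbetween x (by omega) hx; omega
            · obtain ⟨w, w1, w2, w3, w4⟩ := hmin y h2 (by omega)
              have := t4 w (by omega) w2 w3; omega
          · rw [e2 z hz]; exact t4 z z1 z2 z3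
        · omega
    · subst hx
      constructor
      · rintro ⟨t1, t2, t3, t4⟩
        rw [e1] at t3
        by_cases hy : y = y1
        · exact Or.inr ⟨rfl, hy⟩
        · have t4' : ∀ z, x1 < z → z ≤ m → h z ≤ y → φ z ≤ y := by
            intro z z1 z2 z3
            have := t4 z z1 z2 z3
            rwa [e2 z (by omega)] at this
          refine Or.inl ⟨⟨t1, t2, ?_, t4'⟩, by omega⟩
          by_contra hc
          obtain ⟨w, w1, w2, w3, w4⟩ := hmin y (by omega) (by omega)
          have := t4' w w1 w2 w3; omega
      · rintro (⟨⟨t1, t2, t3, t4⟩, t5⟩ | ⟨_, rfl⟩)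
        · refine ⟨t1, t2, by rw [e1]; omega, ?_⟩
          intro z z1 z2 z3
          rw [e2 z (by omega)]; exact t4 z z1 z2 z3
        · refine ⟨hx1le, by omega, by rw [e1], ?_⟩
          intro z z1 z2 z3
          rw [e2 z (by omega)]; exact hQ2 z z1 z2 z3
    · constructor
      · rintro ⟨t1, t2, t3, t4⟩
        rw [e2 x (by omega)] at t3
        refine Or.inl ⟨⟨t1, t2, t3, ?_⟩, by omega⟩
        intro z z1 z2 z3
        have := t4 z z1 z2 z3
        rwa [e2 z (by omega)] at this
      · rintro (⟨⟨t1, t2, t3, t4⟩, t5⟩ | t5)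
        · refine ⟨t1, t2, by rw [e2 x (by omega)]; exact t3, ?_⟩
          intro z z1 z2 z3
          rw [e2 z (by omega)]; exact t4 z z1 z2 z3
        · omega
  have hnT1 : ¬ Tr m h φ x1 y1 := by rintro ⟨_, _, h3, _⟩; omega
  have hx1T : Tr m h φ x1 (φ x1) :=
    ⟨hx1le, hlb1, le_rfl, fun z z1 z2 z3 => G.pat x1 z z1 z2 z3⟩
  have hx0y1 : Tr m h φ x0 y1 := by
    refine ⟨hx0m, by omega, hy1x0, ?_⟩
    intro z z1 z2 z3
    rcases lt_trichotomy z x1 with hz | hz | hz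
    · have := hbetween z z1 hz; omega
    · rw [hz]; omega
    · exact hQ2 z hz z2 z3
  have hhx : ∀ a, a ≤ x1 → h a ≤ φ x1 := fun a ha => (H.mono a x1 ha hx1le).trans hlb1
  have rp := rect_pipes (m := m) (n := n) (C := Cr m n h (Tr m h φ)) (fun x y hc => hc.2.1)
    x0 (φ x1) x1 y1 hx01 hy01 hx1le hy1n
    (fun hc => hc.2.2.2 hx0T) (fun hc => hc.2.2.2 hx0y1) (fun hc => hc.2.2.2 hx1T)
    (fun b b1 b2 => ⟨hx0m, by omega, by omega, by
      rintro ⟨_, _, _, t4⟩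
      obtain ⟨w, w1, w2, w3, w4⟩ := hmin b b1 b2
      have := t4 w (by omega) w2 w3; omega⟩)
    (fun b b1 b2 => ⟨hx1le, by omega, by omega, by
      rintro ⟨_, _, t3, _⟩; omega⟩)
    (fun a a1 a2 => ⟨by omega, by omega, hhx a a2.le, by
      rintro ⟨_, _, t3, _⟩
      have := hbetween a a1 a2; omega⟩)
    (fun a a1 a2 => ⟨by omega, by omega, by have := hhx a a2.le; omega, by
      rintro ⟨_, _, t3, _⟩
      have := hbetween a a1 a2; omega⟩)
  refine ⟨φ', ⟨G, G2, ?_, x0, φ x1, x1, y1, hy01, hx0T, hnT1, hT⟩, ?_, ?_, x1, hx1le, ?_⟩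
  · refine flip_prod x0 (φ x1) x1 y1 hy01 hx0m hx1le hy1n (fun hc => hc.2.2.2 hx0T) ?_ ?_ ?_ ?_ rp.1 rp.2
    · refine ⟨hx0m, by omega, hx0h, ?_⟩
      rw [hT]
      rintro (⟨_, h2⟩ | h2)
      · exact h2 rfl
      · simp only [Prod.mk.injEq] at h2; omega
    · exact ⟨hx1le, hy1n, by omega, hnT1⟩
    · intro hc
      exact hc.2.2.2 ((hT _ _).2 (Or.inr rfl))
    · intro x y n1 n2
      unfold Cr
      rw [hT]
      tauto
  · intro x
    by_cases hx : x = x1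
    · rw [hx, e1]; exact hy01.le
    · rw [e2 x hx]
  · intro x
    by_cases hx : x = x1
    · rw [hx, e1]; exact hyz
    · rw [e2 x hx]; exact hle x
  · rw [e1]; exact hy01

lemma climb {m n : ℕ} {h : ℕ → ℕ} (H : Ht m n h) {ψ : ℕ → ℕ} (G' : Good m n h ψ) :
    ∀ (N : ℕ) (φ : ℕ → ℕ), (∑ x ∈ Finset.range (m + 1), (ψ x - φ x)) ≤ N → Good m n h φ → φ ≤ ψ →
    Relation.ReflTransGen (Step m n h) φ ψ := by
  intro N
  induction N with
  | zero =>
    intro φ hs G hle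
    have : φ = ψ := by
      by_contra hne
      obtain ⟨φ', _, h2, h3, x, hx, h4⟩ := step_exists H G G' hle hne
      have h5 : ψ x - φ x ≤ ∑ x ∈ Finset.range (m + 1), (ψ x - φ x) := Finset.single_le_sum (f := fun x => ψ x - φ x) (fun _ _ => Nat.zero_le _)
        (Finset.mem_range.2 (Nat.lt_succ_of_le hx))
      have : φ' x ≤ ψ x := h3 x
      omega
    rw [this]
  | succ N ih =>
    intro φ hs G hle
    by_cases hne : φ = ψ
    · rw [hne]
    · obtain ⟨φ', h1, h2, h3, x, hx, h4⟩ := step_exists H G G' hle hne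
      refine Relation.ReflTransGen.head h1 (ih φ' ?_ h1.2.1 h3)
      have : (∑ x ∈ Finset.range (m + 1), (ψ x - φ' x)) < ∑ x ∈ Finset.range (m + 1), (ψ x - φ x) := by
        apply Finset.sum_lt_sum
        · intro z _
          have : φ z ≤ φ' z := h2 z; omega
        · refine ⟨x, Finset.mem_range.2 (Nat.lt_succ_of_le hx), ?_⟩
          have : φ' x ≤ ψ x := h3 x; omega
      omega

lemma climb' {m n : ℕ} {h : ℕ → ℕ} (H : Ht m n h) {φ ψ : ℕ → ℕ} (G : Good m n h φ)
    (G' : Good m n h ψ) (hle : φ ≤ ψ) : Relation.ReflTransGen (Step m n h) φ ψ :=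
  climb H G' _ φ le_rfl G hle

/-- The tree as a finite set. -/
noncomputable def TrF (m n : ℕ) (h φ : ℕ → ℕ) : Finset (ℕ × ℕ) :=
  (Finset.range (m + 1) ×ˢ Finset.range (n + 1)).filter fun p => Tr m h φ p.1 p.2

lemma mem_TrF {m n : ℕ} {h φ : ℕ → ℕ} (G : Good m n h φ) (p : ℕ × ℕ) :
    p ∈ TrF m n h φ ↔ Tr m h φ p.1 p.2 := by
  unfold TrF
  simp only [Finset.mem_filter, Finset.mem_product, Finset.mem_range]
  constructor
  · exact fun h => h.2
  · intro ht
    have := G.ub p.1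
    exact ⟨⟨by have := ht.1; omega, by have := ht.2.2.1; omega⟩, ht⟩

lemma step_card {m n : ℕ} {h φ φ' : ℕ → ℕ} (S : Step m n h φ φ') :
    (TrF m n h φ').card = (TrF m n h φ).card := by
  obtain ⟨G, G', _, x0, y0, x1, y1, hy, h0, h1, hT⟩ := S
  have : TrF m n h φ' = insert (x1, y1) ((TrF m n h φ).erase (x0, y0)) := by
    ext ⟨x, y⟩
    rw [mem_TrF G', hT, Finset.mem_insert, Finset.mem_erase, mem_TrF G]
    tauto
  rw [this, Finset.card_insert_of_notMem, Finset.card_erase_of_mem]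
  · have : 0 < (TrF m n h φ).card := Finset.card_pos.2 ⟨(x0, y0), (mem_TrF G _).2 h0⟩
    omega
  · exact (mem_TrF G _).2 h0
  · rw [Finset.mem_erase, mem_TrF G]; tauto

lemma good_card {m n : ℕ} {h φ : ℕ → ℕ} (H : Ht m n h) (G : Good m n h φ) :
    (TrF m n h φ).card = (TrF m n h (phiMin m n h)).card ∧
    colW m n (Cr m n h (Tr m h φ)) (n + 1) = colW m n (Cr m n h (Tr m h (phiMin m n h))) (n + 1) := by
  have := climb' H (phiMin_good H) G (phiMin_le G)
  induction this with
  | refl => exact ⟨rfl, rfl⟩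
  | tail _ s ih =>
    have ih := ih s.1
    exact ⟨(step_card s).trans ih.1, s.2.2.1.trans ih.2⟩

lemma min_card {m n : ℕ} {h : ℕ → ℕ} (H : Ht m n h) :
    m + n + 1 ≤ (TrF m n h (phiMin m n h)).card := by
  have G := phiMin_good H
  have hsub : (Finset.range (n + 1)).image (fun y => ((0 : ℕ), y)) ∪
      (Finset.range m).image (fun x => (x + 1, h (x + 1))) ⊆ TrF m n h (phiMin m n h) := by
    intro p hp
    rw [mem_TrF G, Tr_min H]
    rw [Finset.mem_union, Finset.mem_image, Finset.mem_image] at hp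
    rcases hp with ⟨y, hy, rfl⟩ | ⟨x, hx, rfl⟩
    · have := Finset.mem_range.1 hy
      exact ⟨by simp, by simp [H.zero], by simpa using Nat.le_of_lt_succ this, Or.inl rfl⟩
    · have := Finset.mem_range.1 hx
      exact ⟨by simpa using this, le_rfl, H.le (x + 1) (by omega), Or.inr rfl⟩
  have := Finset.card_le_card hsub
  rw [Finset.card_union_of_disjoint, Finset.card_image_of_injective, Finset.card_image_of_injective,
    Finset.card_range, Finset.card_range] at this
  · omega
  · intro a b hab; simp only [Prod.mk.injEq] at hab; omega
  · intro a b hab; simp only [Prod.mk.injEq] at hab; omega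
  · rw [Finset.disjoint_left]
    intro p hp hq
    rw [Finset.mem_image] at hp hq
    obtain ⟨y, _, rfl⟩ := hp
    obtain ⟨x, _, hx⟩ := hq
    simp only [Prod.mk.injEq] at hx; omega

/-- A compatible set of the right size is a tree. -/
lemma compat_is_tree {m n : ℕ} {h : ℕ → ℕ} (H : Ht m n h) (T : Finset (ℕ × ℕ))
    (hA : ∀ p ∈ T, p.1 ≤ m ∧ h p.1 ≤ p.2 ∧ p.2 ≤ n)
    (hc : ∀ x1 y1 x2 y2, (x1, y1) ∈ T → (x2, y2) ∈ T → x1 < x2 → y1 < y2 → h x2 ≤ y1 → False)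
    (hcard : T.card = (TrF m n h (phiMin m n h)).card) :
    ∃ φ, Good m n h φ ∧ T = TrF m n h φ := by
  have hbig := min_card H
  -- every column is nonempty
  have hcol : ∀ x, x ≤ m → ∃ y, (x, y) ∈ T := by
    let nt : ℕ × ℕ → Prop := fun p => ∃ y', p.2 < y' ∧ (p.1, y') ∈ T
    have e := Finset.card_filter_add_card_filter_not (s := T) nt
    have b1 : (T.filter nt).card ≤ (Finset.range n).card := by
      apply Finset.card_le_card_of_injOn Prod.snd
      · rintro ⟨x, y⟩ hp
        simp only [Finset.coe_filter, Set.mem_ofPred_eq] at hp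
        obtain ⟨h1, y', h2, h3⟩ := hp
        have := hA _ h3
        simp only [Finset.coe_range, Set.mem_Iio]
        simp only at this h2
        omega
      · rintro ⟨x, y⟩ hp ⟨x', y''⟩ hq hxy
        simp only [Finset.coe_filter, Set.mem_ofPred_eq] at hp hq
        simp only at hxy
        subst hxy
        obtain ⟨p1, p2, p3, p4⟩ := hp
        obtain ⟨q1, q2, q3, q4⟩ := hq
        simp only at p3 q3 p4 q4
        rcases lt_trichotomy x x' with hx | hx | hx
        · exact (hc _ _ _ _ p1 q4 hx q3 (hA _ q1).2.1).elim
        · rw [hx]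
        · exact (hc _ _ _ _ q1 p4 hx p3 (hA _ p1).2.1).elim
    have b2 : (T.filter (fun p => ¬ nt p)).card ≤ (T.image Prod.fst).card := by
      apply Finset.card_le_card_of_injOn Prod.fst
      · intro p hp
        simp only [Finset.coe_filter, Set.mem_ofPred_eq] at hp
        exact Finset.mem_coe.2 (Finset.mem_image_of_mem _ hp.1)
      · rintro ⟨x, y⟩ hp ⟨x', y'⟩ hq hxy
        simp only [Finset.coe_filter, Set.mem_ofPred_eq] at hp hq
        simp only at hxy
        subst hxy
        have n1 : ¬ y < y' := fun hlt => hp.2 ⟨y', hlt, hq.1⟩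
        have n2 : ¬ y' < y := fun hlt => hq.2 ⟨y, hlt, hp.1⟩
        have : y = y' := by omega
        rw [this]
    have hsub : T.image Prod.fst ⊆ Finset.range (m + 1) := by
      intro x hx
      obtain ⟨p, hp, rfl⟩ := Finset.mem_image.1 hx
      have := (hA p hp).1
      exact Finset.mem_range.2 (by omega)
    rw [Finset.card_range] at b1
    have heq := Finset.eq_of_subset_of_card_le hsub (by rw [Finset.card_range]; omega)
    intro x hx
    have : x ∈ T.image Prod.fst := by rw [heq]; exact Finset.mem_range.2 (by omega)
    obtain ⟨p, hp, rfl⟩ := Finset.mem_image.1 this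
    exact ⟨p.2, hp⟩
  have htop : ∀ x, ∃ t, x ≤ m → (x, t) ∈ T ∧ ∀ y, (x, y) ∈ T → y ≤ t := by
    intro x
    by_cases hx : x ≤ m
    · obtain ⟨y0, hy0⟩ := hcol x hx
      let P : ℕ → Prop := fun y => (x, y) ∈ T
      refine ⟨Nat.findGreatest P n, fun _ => ⟨?_, ?_⟩⟩
      · exact Nat.findGreatest_spec (P := P) (hA _ hy0).2.2 hy0
      · intro y hy
        exact Nat.le_findGreatest (P := P) (hA _ hy).2.2 hy
    · exact ⟨0, fun h => absurd h hx⟩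
  choose t ht using htop
  let φ : ℕ → ℕ := fun x => if x = 0 then n else if x ≤ m then t x else n
  have e1 : ∀ x, 0 < x → x ≤ m → φ x = t x := by
    intro x h1 h2
    simp only [φ]; rw [if_neg (by omega), if_pos h2]
  have e0 : φ 0 = n := by simp [φ]
  have ub : ∀ x, φ x ≤ n := by
    intro x
    simp only [φ]
    split_ifs with h1 h2
    · exact le_rfl
    · exact (hA _ (ht x h2).1).2.2
    · exact le_rfl
  have G : Good m n h φ := by
    refine ⟨e0, ?_, ub, ?_, ?_⟩
    · intro x hx
      rcases Nat.eq_zero_or_pos x with h0 | h0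
      · rw [h0, H.zero]; omega
      · rw [e1 x h0 hx]; exact (hA _ (ht x hx).1).2.1
    · intro x hx
      simp only [φ]; rw [if_neg (by omega), if_neg (by omega)]
    · intro x x' hlt hx' hh
      rcases Nat.eq_zero_or_pos x with h0 | h0
      · rw [h0, e0]; exact ub x'
      · rw [e1 x h0 (by omega)] at hh ⊢
        rw [e1 x' (by omega) hx']
        by_contra hcon
        exact hc _ _ _ _ (ht x (by omega)).1 (ht x' hx').1 hlt (by omega) hh
  refine ⟨φ, G, ?_⟩
  apply Finset.eq_of_subset_of_card_le
  · rintro ⟨x, y⟩ hp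
    have hpA := hA _ hp
    simp only at hpA
    rw [mem_TrF G]
    refine ⟨hpA.1, hpA.2.1, ?_, ?_⟩
    · rcases Nat.eq_zero_or_pos x with h0 | h0
      · simp only [h0, e0]; exact hpA.2.2
      · simp only [e1 x h0 hpA.1]; exact (ht x hpA.1).2 y hp
    · intro z z1 z2 z3
      simp only at z1 z3 ⊢
      rw [e1 z (by omega) z2]
      by_contra hcon
      exact hc _ _ _ _ hp (ht z z2).1 z1 (by omega) z3
  · rw [(good_card H G).1, hcard]

/-- An exchange increasing in the reading order increases the top function. -/
lemma flip_mono {m n : ℕ} {h φ ψ : ℕ → ℕ} (H : Ht m n h) (G : Good m n h φ) (G' : Good m n h ψ)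
    (p q : ℕ × ℕ) (hpq : p.2 < q.2 ∨ (p.2 = q.2 ∧ p.1 < q.1))
    (h1 : ∀ r, r ∈ TrF m n h φ → r ≠ p → r ∈ TrF m n h ψ)
    (h2 : ∀ r, r ∈ TrF m n h ψ → r ≠ q → r ∈ TrF m n h φ) : φ ≤ ψ := by
  intro x
  by_contra hc
  have hc : ψ x < φ x := Nat.lt_of_not_le hc
  have hxm : x ≤ m := by
    by_contra hx
    have := G.out x (by omega)
    have := G'.out x (by omega)
    omega
  have top : ∀ χ : ℕ → ℕ, Good m n h χ → (x, χ x) ∈ TrF m n h χ := by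
    intro χ K
    rw [mem_TrF K]
    exact ⟨hxm, K.lb x hxm, le_rfl, fun z z1 z2 z3 => K.pat x z z1 z2 z3⟩
  have hp : p = (x, φ x) := by
    by_contra hne
    have := h1 _ (top φ G) (fun h => hne h.symm)
    rw [mem_TrF G'] at this
    have := this.2.2.1
    simp only at this
    omega
  have hq : φ x ≤ q.2 := by rw [hp] at hpq; simp only at hpq; omega
  obtain ⟨x3, a1, a2, a3, a4, _⟩ := exists_nontop H G' (ψ x) (by have := G.ub x; omega)
  have hx3 : x3 < x := by
    by_contra hcon
    rcases Nat.eq_or_lt_of_le (Nat.le_of_not_lt hcon) with h3 | h3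
    · rw [← h3] at a3; omega
    · have := G'.pat x x3 h3 a1 a2; omega
  have hmem : (x3, ψ x) ∈ TrF m n h φ := by
    apply h2
    · rw [mem_TrF G']; exact a4
    · intro h; rw [← h] at hq; simp only at hq; omega
  rw [mem_TrF G] at hmem
  have := hmem.2.2.2 x hx3 hxm (G'.lb x hxm)
  simp only at this
  omega

lemma good_inf {m n : ℕ} {h φ ψ : ℕ → ℕ} (G : Good m n h φ) (G' : Good m n h ψ) :
    Good m n h (φ ⊓ ψ) := by
  refine ⟨?_, ?_, ?_, ?_, ?_⟩
  · simp [G.z, G'.z]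
  · intro x hx; exact le_min (G.lb x hx) (G'.lb x hx)
  · intro x; exact (min_le_left _ _).trans (G.ub x)
  · intro x hx; simp [G.out x hx, G'.out x hx]
  · intro x x' hlt hx' hh
    exact min_le_min (G.pat x x' hlt hx' (hh.trans (min_le_left _ _)))
      (G'.pat x x' hlt hx' (hh.trans (min_le_right _ _)))

lemma good_sup {m n : ℕ} {h φ ψ : ℕ → ℕ} (H : Ht m n h) (G : Good m n h φ) (G' : Good m n h ψ) :
    ∃ κ, Good m n h κ ∧ φ ≤ κ ∧ ψ ≤ κ ∧ ∀ χ, Good m n h χ → φ ≤ χ → ψ ≤ χ → κ ≤ χ := by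
  let U : ℕ → Set ℕ := fun x => {v | ∃ χ, Good m n h χ ∧ φ ≤ χ ∧ ψ ≤ χ ∧ χ x = v}
  have hU : ∀ x, (U x).Nonempty := by
    intro x
    refine ⟨n, fun _ => n, ⟨rfl, fun x hx => H.le x hx, fun _ => le_rfl, fun _ _ => rfl,
      fun _ _ _ _ _ => le_rfl⟩, fun x => G.ub x, fun x => G'.ub x, rfl⟩
  have hmem : ∀ x, sInf (U x) ∈ U x := fun x => Nat.sInf_mem (hU x)
  have hle : ∀ χ, Good m n h χ → φ ≤ χ → ψ ≤ χ → ∀ x, sInf (U x) ≤ χ x := by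
    intro χ K h1 h2 x
    exact Nat.sInf_le ⟨χ, K, h1, h2, rfl⟩
  refine ⟨fun x => sInf (U x), ⟨?_, ?_, ?_, ?_, ?_⟩, ?_, ?_, fun χ K h1 h2 x => hle χ K h1 h2 x⟩
  · obtain ⟨χ, K, _, _, h3⟩ := hmem 0
    simp only [← h3, K.z]
  · intro x hx
    obtain ⟨χ, K, _, _, h3⟩ := hmem x
    simp only [← h3]; exact K.lb x hx
  · intro x
    obtain ⟨χ, K, _, _, h3⟩ := hmem x
    simp only [← h3]; exact K.ub x
  · intro x hx
    obtain ⟨χ, K, _, _, h3⟩ := hmem x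
    simp only [← h3]; exact K.out x hx
  · intro x x' hlt hx' hh
    obtain ⟨χ, K, h1, h2, h3⟩ := hmem x
    change h x' ≤ sInf (U x) at hh
    change sInf (U x') ≤ sInf (U x)
    rw [← h3] at hh ⊢
    exact (hle χ K h1 h2 x').trans (K.pat x x' hlt hx' hh)
  · intro x
    obtain ⟨χ, K, h1, h2, h3⟩ := hmem x
    simp only [← h3]; exact h1 x
  · intro x
    obtain ⟨χ, K, h1, h2, h3⟩ := hmem x
    simp only [← h3]; exact h2 x

/-! Conversion of the list and index data of the statement. -/

lemma heightAt_zero (ν : List Bool) : heightAt ν 0 = 0 := by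
  cases ν <;> simp [heightAt]

lemma heightAt_succ (ν : List Bool) : ∀ x, x + 1 ≤ eastSteps ν →
    heightAt ν x ≤ heightAt ν (x + 1) ∧ heightAt ν (x + 1) ≤ northSteps ν := by
  induction ν with
  | nil => intro x hx; simp [eastSteps] at hx
  | cons b ν ih =>
    intro x hx
    cases b with
    | true =>
      have hx' : x + 1 ≤ eastSteps ν := by simpa [eastSteps] using hx
      have hn : northSteps (true :: ν) = northSteps ν + 1 := by simp [northSteps]
      have := ih x hx'
      rw [hn]
      cases x with
      | zero => simp only [heightAt] at this ⊢; omega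
      | succ x => simp only [heightAt] at this ⊢; omega
    | false =>
      have hx' : x ≤ eastSteps ν := by simpa [eastSteps] using hx
      have hn : northSteps (false :: ν) = northSteps ν := by simp [northSteps]
      rw [hn]
      cases x with
      | zero => simp [heightAt]
      | succ x => have := ih x hx'; simpa only [heightAt] using this

lemma ht_nu (ν : List Bool) : Ht (eastSteps ν) (northSteps ν) (heightAt ν) := by
  refine ⟨heightAt_zero ν, ?_, ?_⟩
  · intro x x' hxx
    induction x', hxx using Nat.le_induction with
    | base => intro _; exact le_rfl
    | succ k hk ih => intro h2; exact (ih (by omega)).trans (heightAt_succ ν k h2).1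
  · intro x hx
    cases x with
    | zero => rw [heightAt_zero]; exact Nat.zero_le _
    | succ x => exact (heightAt_succ ν x hx).2

lemma east_end (ν : List Bool) : ∀ x y, (∃ i < ν.length, ν.getD i true = false ∧
    (x, y) = pointAt ν (i + 1)) ↔ (1 ≤ x ∧ x ≤ eastSteps ν ∧ y = heightAt ν x) := by
  induction ν with
  | nil => intro x y; simp [eastSteps]; omega
  | cons b ν ih =>
    intro x y
    have key : (∃ i < (b :: ν).length, (b :: ν).getD i true = false ∧
        (x, y) = pointAt (b :: ν) (i + 1)) ↔ (b = false ∧ x = 1 ∧ y = 0) ∨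
        ∃ x' y', (x = x' + (if b = false then 1 else 0) ∧ y = y' + (if b = true then 1 else 0)) ∧
          ∃ i < ν.length, ν.getD i true = false ∧ (x', y') = pointAt ν (i + 1) := by
      constructor
      · rintro ⟨i, hi, h1, h2⟩
        cases i with
        | zero =>
          left
          have hb : b = false := by simpa using h1
          subst hb
          simpa [pointAt] using h2
        | succ i =>
          right
          refine ⟨(pointAt ν (i + 1)).1, (pointAt ν (i + 1)).2, ?_, i, by simpa using hi,
            by simpa using h1, rfl⟩
          cases b <;> simpa [pointAt] using h2
      · rintro (⟨hb, hx, hy⟩ | ⟨x', y', ⟨hx, hy⟩, i, hi, h1, h2⟩)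
        · subst hb hx hy
          exact ⟨0, by simp, by simp, by simp [pointAt]⟩
        · refine ⟨i + 1, by simpa using hi, by simpa using h1, ?_⟩
          simp only [pointAt, Prod.mk.injEq] at h2
          obtain ⟨h2, h3⟩ := h2
          subst hx hy h2 h3
          cases b <;> simp [pointAt]
    rw [key]
    simp only [ih]
    cases b with
    | true =>
      simp only [eastSteps, List.count_cons]
      constructor
      · rintro (⟨h, _⟩ | ⟨x', y', ⟨h1, h2⟩, h3, h4, h5⟩)
        · simp at h
        · simp at h1 h2
          subst h1 h2 h5
          refine ⟨h3, by simpa [eastSteps] using h4, ?_⟩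
          obtain ⟨k, rfl⟩ : ∃ k, x = k + 1 := ⟨x - 1, by omega⟩
          simp [heightAt]
      · rintro ⟨h1, h2, h3⟩
        right
        obtain ⟨k, rfl⟩ : ∃ k, x = k + 1 := ⟨x - 1, by omega⟩
        refine ⟨k + 1, heightAt ν (k + 1), ⟨by simp, by simp [h3, heightAt]⟩, h1, by simpa [eastSteps] using h2, rfl⟩
    | false =>
      simp only [eastSteps, List.count_cons]
      constructor
      · rintro (⟨_, h, h'⟩ | ⟨x', y', ⟨h1, h2⟩, h3, h4, h5⟩)
        · subst h h'
          simp [heightAt, heightAt_zero]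
        · simp at h1 h2
          subst h1 h2 h5
          exact ⟨by omega, by simpa [eastSteps] using h4, by simp [heightAt]⟩
      · rintro ⟨h1, h2, h3⟩
        obtain ⟨k, rfl⟩ : ∃ k, x = k + 1 := ⟨x - 1, by omega⟩
        cases k with
        | zero => left; simp [heightAt, heightAt_zero] at h3; simp [h3]
        | succ k =>
          right
          exact ⟨k + 1, heightAt ν (k + 1), ⟨by simp, by simp [h3, heightAt]⟩, by omega,
            by simpa [eastSteps] using h2, rfl⟩

lemma Tmin_iff (ν : List Bool) (x y : ℕ) : (x, y) ∈ TminSet ν ↔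
    Tr (eastSteps ν) (heightAt ν) (phiMin (eastSteps ν) (northSteps ν) (heightAt ν)) x y := by
  rw [Tr_min (ht_nu ν)]
  have h1 : (x, y) ∈ TminSet ν ↔ (x ≤ eastSteps ν ∧ heightAt ν x ≤ y ∧ y ≤ northSteps ν) ∧
    (x = 0 ∨ ∃ i < ν.length, ν.getD i true = false ∧ (x, y) = pointAt ν (i + 1)) := Iff.rfl
  rw [h1, east_end]
  constructor
  · rintro ⟨⟨a, b, c⟩, d | ⟨_, _, d⟩⟩
    · exact ⟨a, b, c, Or.inl d⟩
    · exact ⟨a, b, c, Or.inr d⟩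
  · rintro ⟨a, b, c, d⟩
    refine ⟨⟨a, b, c⟩, ?_⟩
    rcases Nat.eq_zero_or_pos x with h0 | h0
    · exact Or.inl h0
    · exact Or.inr ⟨h0, a, d.resolve_left (by omega)⟩

/-! The reading list. -/

def lexR (p q : ℕ × ℕ) : Prop := p.2 < q.2 ∨ (p.2 = q.2 ∧ p.1 < q.1)

lemma mem_reading (ν : List Bool) (p : ℕ × ℕ) : p ∈ readingList ν ↔
    p.1 ≤ eastSteps ν ∧ heightAt ν p.1 ≤ p.2 ∧ p.2 ≤ northSteps ν := by
  obtain ⟨x, y⟩ := p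
  simp only [readingList, List.mem_flatten, List.mem_map, List.mem_range]
  constructor
  · rintro ⟨l, ⟨y', hy, rfl⟩, h⟩
    simp only [List.mem_map, List.mem_filter, List.mem_range, decide_eq_true_eq, Prod.mk.injEq] at h
    obtain ⟨x', ⟨h1, h2⟩, h3, h4⟩ := h
    subst h3 h4
    exact ⟨by omega, h2, by omega⟩
  · rintro ⟨h1, h2, h3⟩
    refine ⟨_, ⟨y, by omega, rfl⟩, ?_⟩
    simp only [List.mem_map, List.mem_filter, List.mem_range, decide_eq_true_eq, Prod.mk.injEq]
    exact ⟨x, ⟨by omega, h2⟩, by simp⟩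

lemma reading_sorted (ν : List Bool) : (readingList ν).Pairwise lexR := by
  rw [readingList, List.pairwise_flatten]
  constructor
  · intro l hl
    simp only [List.mem_map] at hl
    obtain ⟨y, _, rfl⟩ := hl
    rw [List.pairwise_map]
    exact (List.pairwise_lt_range.filter _).imp (fun h => Or.inr ⟨rfl, h⟩)
  · rw [List.pairwise_map]
    refine List.pairwise_lt_range.imp ?_
    intro y y' hy p hp q hq
    simp only [List.mem_map] at hp hq
    obtain ⟨_, _, rfl⟩ := hp
    obtain ⟨_, _, rfl⟩ := hq
    exact Or.inl hy

def ptAt (ν : List Bool) (i : ℕ) : ℕ × ℕ := (readingList ν).getD i (0, 0)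

lemma ptAt_lt (ν : List Bool) {i j : ℕ} (hij : i < j) (hj : j < (readingList ν).length) :
    lexR (ptAt ν i) (ptAt ν j) := by
  have := List.pairwise_iff_getElem.1 (reading_sorted ν) i j (by omega) hj hij
  rw [ptAt, ptAt, List.getD_eq_getElem _ _ hj, List.getD_eq_getElem _ _ (hij.trans hj)]
  exact this

lemma ptAt_inj (ν : List Bool) {i j : ℕ} (hi : i < (readingList ν).length)
    (hj : j < (readingList ν).length) (h : ptAt ν i = ptAt ν j) : i = j := by
  rcases lt_trichotomy i j with h1 | h1 | h1
  · have := ptAt_lt ν h1 hj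
    rw [h] at this; unfold lexR at this; omega
  · exact h1
  · have := ptAt_lt ν h1 hi
    rw [h] at this; unfold lexR at this; omega

lemma ptAt_lt' (ν : List Bool) {i j : ℕ} (hi : i < (readingList ν).length)
    (hj : j < (readingList ν).length) (h : lexR (ptAt ν i) (ptAt ν j)) : i < j := by
  rcases lt_trichotomy i j with h1 | h1 | h1
  · exact h1
  · rw [h1] at h; unfold lexR at h; omega
  · have := ptAt_lt ν h1 hi
    unfold lexR at this h; omega

lemma ptAt_mem (ν : List Bool) {i : ℕ} (hi : i < (readingList ν).length) :
    ptAt ν i ∈ readingList ν := by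
  rw [ptAt, List.getD_eq_getElem _ _ hi]; exact List.getElem_mem hi

lemma ptAt_surj (ν : List Bool) {p : ℕ × ℕ} (hp : p ∈ readingList ν) :
    ∃ i, i < (readingList ν).length ∧ ptAt ν i = p := by
  obtain ⟨i, hi, h⟩ := List.getElem_of_mem hp
  exact ⟨i, hi, by rw [ptAt, List.getD_eq_getElem _ _ hi]; exact h⟩

lemma reading_eq_map (ν : List Bool) :
    readingList ν = (List.range (readingList ν).length).map (ptAt ν) := by
  apply List.ext_getElem
  · simp
  · intro i h1 h2
    simp [ptAt, List.getElem?_eq_getElem h1]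

lemma prod_filter_map {α : Type*} (l : List α) (p : α → Bool) (f : α → Equiv.Perm ℕ) :
    ((l.filter p).map f).prod = (l.map fun a => if p a = true then f a else 1).prod := by
  induction l with
  | nil => simp
  | cons a l ih =>
    by_cases h : p a = true
    · simp [h, ih]
    · simp [h, ih]

lemma prod_reading (ν : List Bool) (T : ℕ × ℕ → Prop) :
    ((readingList ν).map fun p => if ¬ T p then labelPerm ν p else 1).prod =
      colW (eastSteps ν) (northSteps ν) (Cr (eastSteps ν) (northSteps ν) (heightAt ν)
        (fun x y => T (x, y))) (northSteps ν + 1) := by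
  rw [readingList, List.map_flatten, List.prod_flatten, List.map_map, List.map_map]
  have hrow : ∀ y, y ≤ northSteps ν → ∀ k, k ≤ eastSteps ν + 1 →
      ((((List.range k).filter fun x => decide (heightAt ν x ≤ y)).map fun x => (x, y)).map
        fun p => if ¬ T p then labelPerm ν p else 1).prod =
      rowW (northSteps ν) (Cr (eastSteps ν) (northSteps ν) (heightAt ν)
        (fun x y => T (x, y))) y k := by
    intro y hy k
    rw [List.map_map, prod_filter_map]
    induction k with
    | zero => intro _; simp [rowW]
    | succ k ih =>
      intro hk
      rw [List.range_succ, List.map_append, List.prod_append, ih (by omega), rowW]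
      congr 1
      simp only [List.map_cons, List.map_nil, List.prod_singleton, decide_eq_true_eq,
        Function.comp_apply, Cr, labelPerm, dOf]
      have hk' : k ≤ eastSteps ν := by omega
      by_cases h1 : heightAt ν k ≤ y <;> by_cases h2 : T (k, y) <;> simp [h1, h2, hk', hy]
  have hcol : ∀ k, k ≤ northSteps ν + 1 →
      ((List.range k).map fun y => ((((List.range (eastSteps ν + 1)).filter fun x =>
        decide (heightAt ν x ≤ y)).map fun x => (x, y)).map
        fun p => if ¬ T p then labelPerm ν p else 1).prod).prod =
      colW (eastSteps ν) (northSteps ν) (Cr (eastSteps ν) (northSteps ν) (heightAt ν)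
        (fun x y => T (x, y))) k := by
    intro k
    induction k with
    | zero => intro _; simp [colW]
    | succ k ih =>
      intro hk
      rw [List.range_succ (n := k), List.map_append, List.prod_append, ih (by omega), colW]
      congr 1
      simp only [List.map_cons, List.map_nil, List.prod_singleton]
      exact hrow k (by omega) _ le_rfl
  exact hcol _ le_rfl

lemma piNu_eq (ν : List Bool) : piNu ν =
    colW (eastSteps ν) (northSteps ν) (Cr (eastSteps ν) (northSteps ν) (heightAt ν)
      (Tr (eastSteps ν) (heightAt ν) (phiMin (eastSteps ν) (northSteps ν) (heightAt ν))))
      (northSteps ν + 1) := by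
  have e := prod_reading ν (fun p => p ∈ TminSet ν)
  simp only [Tmin_iff] at e
  rw [← e, piNu, prodOver, prod_filter_map]
  congr 1
  apply List.map_congr_left
  intro p hp
  have hp' : p ∈ APts ν := (mem_reading ν p).1 hp
  simp only [decide_eq_true_eq, Set.mem_sdiff, hp', true_and]

lemma prodAt_eq (ν : List Bool) (I : Finset ℕ) (hI : I ⊆ Finset.range (readingList ν).length) :
    prodAt (Qword ν) (Finset.range (Qword ν).length \ I) =
    colW (eastSteps ν) (northSteps ν) (Cr (eastSteps ν) (northSteps ν) (heightAt ν)
      (fun x y => (x, y) ∈ I.image (ptAt ν))) (northSteps ν + 1) := by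
  rw [← prod_reading ν (fun p => p ∈ I.image (ptAt ν)), reading_eq_map, List.map_map, prodAt,
    prod_filter_map]
  have hl : (Qword ν).length = (readingList ν).length := by simp [Qword]
  rw [hl]
  congr 1
  apply List.map_congr_left
  intro i hi
  have hi := List.mem_range.1 hi
  have e1 : (Qword ν).getD i 1 = labelPerm ν (ptAt ν i) := by
    simp [Qword, ptAt, List.getElem?_eq_getElem hi]
  have e2 : ptAt ν i ∈ I.image (ptAt ν) ↔ i ∈ I := by
    rw [Finset.mem_image]
    constructor
    · rintro ⟨j, hj, h⟩
      rwa [← ptAt_inj ν (Finset.mem_range.1 (hI hj)) hi h]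
    · exact fun h => ⟨i, h, rfl⟩
  simp only [Function.comp_apply, e1, e2, decide_eq_true_eq, Finset.mem_sdiff, Finset.mem_range, hi,
    true_and]

lemma lenInv_pi (ν : List Bool) : lenInv (piNu ν) + (TrF (eastSteps ν) (northSteps ν) (heightAt ν)
    (phiMin (eastSteps ν) (northSteps ν) (heightAt ν))).card = (readingList ν).length := by
  have H := ht_nu ν
  have hnd : (readingList ν).Nodup := (reading_sorted ν).imp (fun {p q} h e => by
    subst e; unfold lexR at h; omega)
  rw [piNu_eq, (lenInv_col (fun x y _ _ hc => min_red H (Cr_min H) x y hc) _ le_rfl).2,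
    ← List.toFinset_card_of_nodup hnd, Finset.sum_comm, ← Finset.sum_product', ← Finset.card_filter,
    ← Finset.card_union_of_disjoint]
  · congr 1
    ext ⟨x, y⟩
    rw [List.mem_toFinset, mem_reading, Finset.mem_union, mem_TrF (phiMin_good H), Tr_min H]
    simp only [Finset.mem_filter, Finset.mem_product, Finset.mem_range, Cr_min H]
    constructor
    · omega
    · omega
  · rw [Finset.disjoint_left]
    rintro ⟨x, y⟩ h1 h2
    rw [mem_TrF (phiMin_good H)] at h2
    exact (Finset.mem_filter.1 h1).2.2.2.2 h2

/-- Indices of the points of the tree attached to `φ`. -/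
noncomputable def idx (ν : List Bool) (φ : ℕ → ℕ) : Finset ℕ :=
  (Finset.range (readingList ν).length).filter fun i =>
    ptAt ν i ∈ TrF (eastSteps ν) (northSteps ν) (heightAt ν) φ

abbrev GoodN (ν : List Bool) (φ : ℕ → ℕ) : Prop :=
  Good (eastSteps ν) (northSteps ν) (heightAt ν) φ

lemma TrF_reading {ν : List Bool} {φ : ℕ → ℕ} {p : ℕ × ℕ}
    (hp : p ∈ TrF (eastSteps ν) (northSteps ν) (heightAt ν) φ) : p ∈ readingList ν := by
  rw [mem_reading]
  simp only [TrF, Finset.mem_filter, Finset.mem_product, Finset.mem_range] at hp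
  exact ⟨hp.2.1, hp.2.2.1, by omega⟩

lemma idx_image (ν : List Bool) (φ : ℕ → ℕ) :
    (idx ν φ).image (ptAt ν) = TrF (eastSteps ν) (northSteps ν) (heightAt ν) φ := by
  ext p
  simp only [Finset.mem_image, idx, Finset.mem_filter, Finset.mem_range]
  constructor
  · rintro ⟨i, hi, rfl⟩; exact hi.2
  · intro hp
    obtain ⟨i, hi, rfl⟩ := ptAt_surj ν (TrF_reading hp)
    exact ⟨i, ⟨hi, hp⟩, rfl⟩

lemma idx_sub (ν : List Bool) (φ : ℕ → ℕ) : idx ν φ ⊆ Finset.range (readingList ν).length :=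
  Finset.filter_subset _ _

lemma card_image (ν : List Bool) (I : Finset ℕ) (hI : I ⊆ Finset.range (readingList ν).length) :
    (I.image (ptAt ν)).card = I.card := by
  apply Finset.card_image_of_injOn
  intro i hi j hj h
  exact ptAt_inj ν (Finset.mem_range.1 (hI hi)) (Finset.mem_range.1 (hI hj)) h

lemma facet_idx {ν : List Bool} {φ : ℕ → ℕ} (G : GoodN ν φ) :
    IsFacet (Qword ν) (piNu ν) (idx ν φ) := by
  have hl : (Qword ν).length = (readingList ν).length := by simp [Qword]
  have gc := good_card (ht_nu ν) G
  refine ⟨by rw [hl]; exact idx_sub ν φ, ?_, ?_⟩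
  · rw [prodAt_eq ν _ (idx_sub ν φ), piNu_eq, ← gc.2, idx_image]
    simp only [mem_TrF G]
  · have h1 := lenInv_pi ν
    rw [hl, Finset.card_sdiff_of_subset (idx_sub ν φ), Finset.card_range,
      ← card_image ν _ (idx_sub ν φ), idx_image, gc.1]
    omega

lemma exists_idx {ν : List Bool} {I : Finset ℕ} (hI : IsFacet (Qword ν) (piNu ν) I) :
    ∃ φ, GoodN ν φ ∧ I = idx ν φ := by
  have hl : (Qword ν).length = (readingList ν).length := by simp [Qword]
  obtain ⟨h1, h2, h3⟩ := hI
  rw [hl] at h1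
  rw [prodAt_eq ν _ h1, piNu_eq] at h2
  have hmem : ∀ p ∈ I.image (ptAt ν), p ∈ readingList ν := by
    intro p hp
    obtain ⟨i, hi, rfl⟩ := Finset.mem_image.1 hp
    exact ptAt_mem ν (Finset.mem_range.1 (h1 hi))
  obtain ⟨φ, G, hT⟩ := compat_is_tree (ht_nu ν) (I.image (ptAt ν))
    (fun p hp => (mem_reading ν p).1 (hmem p hp))
    (fun x1 y1 x2 y2 a b hx hy hh => compat_of_prod (ht_nu ν) _ h2 x1 y1 x2 y2 a b hx hy
      ((mem_reading ν _).1 (hmem _ b)).1 ((mem_reading ν _).1 (hmem _ b)).2.2 hh)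
    (by
      have h4 := lenInv_pi ν
      have h5 := Finset.card_le_card h1
      rw [Finset.card_range] at h5
      rw [hl, Finset.card_sdiff_of_subset h1, Finset.card_range] at h3
      rw [card_image ν I h1]
      omega)
  refine ⟨φ, G, ?_⟩
  ext i
  rw [idx, Finset.mem_filter, ← hT, Finset.mem_image]
  constructor
  · exact fun h => ⟨h1 h, i, h, rfl⟩
  · rintro ⟨h5, j, hj, h6⟩
    rwa [← ptAt_inj ν (Finset.mem_range.1 (h1 hj)) (Finset.mem_range.1 h5) h6]

lemma mem_idx {ν : List Bool} {φ : ℕ → ℕ} (G : GoodN ν φ) (i : ℕ) : i ∈ idx ν φ ↔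
    i < (readingList ν).length ∧ Tr (eastSteps ν) (heightAt ν) φ (ptAt ν i).1 (ptAt ν i).2 := by
  rw [idx, Finset.mem_filter, Finset.mem_range, mem_TrF G]

lemma step_flip {ν : List Bool} {φ φ' : ℕ → ℕ}
    (S : Step (eastSteps ν) (northSteps ν) (heightAt ν) φ φ') :
    IncFlip (Qword ν) (piNu ν) (idx ν φ) (idx ν φ') := by
  obtain ⟨G, G', _, x0, y0, x1, y1, hy, h0, h1, hT⟩ := S
  have t1 : Tr (eastSteps ν) (heightAt ν) φ' x1 y1 := (hT _ _).2 (Or.inr rfl)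
  obtain ⟨i, hi, ei⟩ := ptAt_surj ν (TrF_reading ((mem_TrF G (x0, y0)).2 h0))
  obtain ⟨j, hj, ej⟩ := ptAt_surj ν (TrF_reading ((mem_TrF G' (x1, y1)).2 t1))
  refine ⟨facet_idx G, facet_idx G', i, ?_, j, ?_, ?_, ?_⟩
  · rw [mem_idx G, ei]; exact ⟨hi, h0⟩
  · rw [mem_idx G', ej]; exact ⟨hj, t1⟩
  · apply ptAt_lt' ν hi hj
    rw [ei, ej]; exact Or.inl hy
  · ext k
    rw [Finset.mem_erase, Finset.mem_erase, mem_idx G, mem_idx G', hT]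
    have k1 : k < (readingList ν).length → (((ptAt ν k).1, (ptAt ν k).2) = (x0, y0) ↔ k = i) := by
      intro hk
      rw [← ei]
      exact ⟨fun h => ptAt_inj ν hk hi h, fun h => by rw [h]⟩
    have k2 : k < (readingList ν).length → (((ptAt ν k).1, (ptAt ν k).2) = (x1, y1) ↔ k = j) := by
      intro hk
      rw [← ej]
      exact ⟨fun h => ptAt_inj ν hk hj h, fun h => by rw [h]⟩
    by_cases hk : k < (readingList ν).length
    · have k1 := k1 hk
      have k2 := k2 hk
      rw [Ne, Ne, Ne, k1, k2]
      have : k = j → ¬ Tr (eastSteps ν) (heightAt ν) φ (ptAt ν k).1 (ptAt ν k).2 := by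
        intro e; rw [e, ej]; exact h1
      tauto
    · tauto

lemma flip_le {ν : List Bool} {φ ψ : ℕ → ℕ} (G : GoodN ν φ) (G' : GoodN ν ψ)
    (F : IncFlip (Qword ν) (piNu ν) (idx ν φ) (idx ν ψ)) : φ ≤ ψ := by
  obtain ⟨_, _, i, hi, j, hj, hij, he⟩ := F
  have hj' := ((mem_idx G' j).1 hj).1
  refine flip_mono (ht_nu ν) G G' (ptAt ν i) (ptAt ν j) (ptAt_lt ν hij hj') ?_ ?_
  · intro r hr hne
    obtain ⟨k, hk, rfl⟩ := ptAt_surj ν (TrF_reading hr)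
    have : k ∈ (idx ν φ).erase i := Finset.mem_erase.2 ⟨fun e => hne (by rw [e]),
      Finset.mem_filter.2 ⟨Finset.mem_range.2 hk, hr⟩⟩
    rw [he] at this
    exact (Finset.mem_filter.1 (Finset.mem_of_mem_erase this)).2
  · intro r hr hne
    obtain ⟨k, hk, rfl⟩ := ptAt_surj ν (TrF_reading hr)
    have : k ∈ (idx ν ψ).erase j := Finset.mem_erase.2 ⟨fun e => hne (by rw [e]),
      Finset.mem_filter.2 ⟨Finset.mem_range.2 hk, hr⟩⟩
    rw [← he] at this
    exact (Finset.mem_filter.1 (Finset.mem_of_mem_erase this)).2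

lemma idx_inj {ν : List Bool} {φ ψ : ℕ → ℕ} (G : GoodN ν φ) (G' : GoodN ν ψ)
    (h : idx ν φ = idx ν ψ) : φ ≤ ψ := by
  have e := congrArg (Finset.image (ptAt ν)) h
  rw [idx_image, idx_image] at e
  exact flip_mono (ht_nu ν) G G' (0, 0) (1, 1) (by simp) (fun r hr _ => e ▸ hr)
    (fun r hr _ => e ▸ hr)

lemma flipLE_iff {ν : List Bool} {φ ψ : ℕ → ℕ} (G : GoodN ν φ) (G' : GoodN ν ψ) :
    FlipLE (Qword ν) (piNu ν) (idx ν φ) (idx ν ψ) ↔ φ ≤ ψ := by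
  constructor
  · intro hF
    have : ∀ J, FlipLE (Qword ν) (piNu ν) (idx ν φ) J → ∀ χ, GoodN ν χ → J = idx ν χ → φ ≤ χ := by
      intro J hJ
      induction hJ with
      | refl => intro χ K e; exact idx_inj G K e
      | tail h1 h2 ih =>
        intro χ K e
        obtain ⟨χ', K', e'⟩ := exists_idx h2.1
        rw [e, e'] at h2
        exact (ih χ' K' e').trans (flip_le K' K h2)
    exact this _ hF ψ G' rfl
  · intro hle
    have := climb' (ht_nu ν) G G' hle
    exact Relation.ReflTransGen.lift (p := IncFlip (Qword ν) (piNu ν)) (idx ν)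
      (fun _ _ s => step_flip s) _ _ this

theorem increasing_flip_poset_is_lattice (ν : List Bool) (I J : Finset ℕ)
    (hI : IsFacet (Qword ν) (piNu ν) I) (hJ : IsFacet (Qword ν) (piNu ν) J) :
    (∃ M, IsFacet (Qword ν) (piNu ν) M ∧
      FlipLE (Qword ν) (piNu ν) M I ∧ FlipLE (Qword ν) (piNu ν) M J ∧
      ∀ S, IsFacet (Qword ν) (piNu ν) S → FlipLE (Qword ν) (piNu ν) S I →
        FlipLE (Qword ν) (piNu ν) S J → FlipLE (Qword ν) (piNu ν) S M) ∧
    (∃ K, IsFacet (Qword ν) (piNu ν) K ∧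
      FlipLE (Qword ν) (piNu ν) I K ∧ FlipLE (Qword ν) (piNu ν) J K ∧
      ∀ S, IsFacet (Qword ν) (piNu ν) S → FlipLE (Qword ν) (piNu ν) I S →
        FlipLE (Qword ν) (piNu ν) J S → FlipLE (Qword ν) (piNu ν) K S) := by
  obtain ⟨φ, G, rfl⟩ := exists_idx hI
  obtain ⟨ψ, G', rfl⟩ := exists_idx hJ
  constructor
  · have K := good_inf G G'
    refine ⟨idx ν (φ ⊓ ψ), facet_idx K, (flipLE_iff K G).2 inf_le_left,
      (flipLE_iff K G').2 inf_le_right, ?_⟩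
    intro S hS h1 h2
    obtain ⟨χ, X, rfl⟩ := exists_idx hS
    exact (flipLE_iff X K).2 (le_inf ((flipLE_iff X G).1 h1) ((flipLE_iff X G').1 h2))
  · obtain ⟨κ, K, h1, h2, h3⟩ := good_sup (ht_nu ν) G G'
    refine ⟨idx ν κ, facet_idx K, (flipLE_iff G K).2 h1, (flipLE_iff G' K).2 h2, ?_⟩
    intro S hS h4 h5
    obtain ⟨χ, X, rfl⟩ := exists_idx hS
    exact (flipLE_iff K X).2 (h3 χ X ((flipLE_iff G X).1 h4) ((flipLE_iff G' X).1 h5))
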